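/- arXiv:math/0301063 — 5 statements merged into one kernel-verified Lean document; each statement's English description precedes it below -/
import Mathlib

section
/- Let G : [0, ∞) → M_n(ℂ) be continuous and let S : [0, ∞) → M_n(ℂ) be C¹. Let Γ : ℂⁿ → ℂᵐ be linear, and let C₀, λ, δ > 0 and C₁ ≥ 0 be constants such that: (i) S(x) = S(x)* and ‖S(x)‖ ≤ C₀ for all x; (ii) S(x)G(x) + G(x)*S(x) + S′(x) ≥ 2λ Id for all x (as Hermitian matrices); (iii) S(0) ≥ δ Id − C₁ Γ*Γ. Then for every C¹ function u : [0, ∞) → ℂⁿ with compact support, λ ∫₀^∞ |u(x)|² dx + δ |u(0)|² ≤ (C₀²/λ) ∫₀^∞ |u′(x) − G(x)u(x)|² dx + C₁ |Γ u(0)|². -/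
open Matrix Set
open scoped ComplexOrder

noncomputable section

lemma aux_sum {n : ℕ} (A : Matrix (Fin n) (Fin n) ℂ) :
    Matrix.toEuclideanCLM (𝕜 := ℂ) A = ∑ i, ∑ j, A i j •
      Matrix.toEuclideanCLM (𝕜 := ℂ) (Matrix.single i j (1:ℂ)) := by
  conv_lhs => rw [Matrix.matrix_eq_sum_single A]
  simp only [map_sum, ← map_smul, Matrix.smul_single, smul_eq_mul, mul_one]

lemma aux_cont {n : ℕ} (A : ℝ → Matrix (Fin n) (Fin n) ℂ) (s : Set ℝ)
    (h : ∀ i j, ContinuousOn (fun x => A x i j) s) :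
    ContinuousOn (fun x => Matrix.toEuclideanCLM (𝕜 := ℂ) (A x)) s := by
  have : (fun x => Matrix.toEuclideanCLM (𝕜 := ℂ) (A x)) = fun x => ∑ i, ∑ j, A x i j •
      Matrix.toEuclideanCLM (𝕜 := ℂ) (Matrix.single i j (1:ℂ)) := by
    funext x; exact aux_sum _
  rw [this]
  exact continuousOn_finsetSum _ fun i _ => continuousOn_finsetSum _ fun j _ =>
    (h i j).smul continuousOn_const

lemma aux_deriv {n : ℕ} (S S' : ℝ → Matrix (Fin n) (Fin n) ℂ) (s : Set ℝ) (x : ℝ)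
    (h : ∀ i j, HasDerivWithinAt (fun y => S y i j) (S' x i j) s x)
    (u : ℝ → EuclideanSpace ℂ (Fin n)) (u' : EuclideanSpace ℂ (Fin n))
    (hu : HasDerivWithinAt u u' s x) :
    HasDerivWithinAt (fun y => Matrix.toEuclideanCLM (𝕜 := ℂ) (S y) (u y))
      (Matrix.toEuclideanCLM (𝕜 := ℂ) (S x) u' +
        Matrix.toEuclideanCLM (𝕜 := ℂ) (S' x) (u x)) s x := by
  have e : (fun y => Matrix.toEuclideanCLM (𝕜 := ℂ) (S y) (u y)) = fun y => ∑ i, ∑ j, S y i j •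
      Matrix.toEuclideanCLM (𝕜 := ℂ) (Matrix.single i j (1:ℂ)) (u y) := by
    funext y
    rw [aux_sum (S y)]
    simp [ContinuousLinearMap.sum_apply]
  rw [e, aux_sum (S x), aux_sum (S' x)]
  simp only [ContinuousLinearMap.sum_apply, ContinuousLinearMap.smul_apply,
    ← Finset.sum_add_distrib]
  refine HasDerivWithinAt.fun_sum fun i _ => HasDerivWithinAt.fun_sum fun j _ => ?_
  refine (h i j).smul ?_
  exact (((Matrix.toEuclideanCLM (𝕜 := ℂ)
    (Matrix.single i j (1:ℂ))).restrictScalars ℝ).hasFDerivAt.comp_hasDerivWithinAt x hu)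

lemma aux_psd {n : ℕ} {A : Matrix (Fin n) (Fin n) ℂ} (h : A.PosSemidef)
    (v : EuclideanSpace ℂ (Fin n)) :
    0 ≤ (inner ℂ v (Matrix.toEuclideanCLM (𝕜 := ℂ) A v)).re := by
  have := h.re_dotProduct_nonneg (WithLp.ofLp v)
  rw [EuclideanSpace.inner_eq_star_dotProduct, dotProduct_comm]
  simpa using this

lemma aux_adj {n : ℕ} (A : Matrix (Fin n) (Fin n) ℂ) (v w : EuclideanSpace ℂ (Fin n)) :
    inner ℂ v (Matrix.toEuclideanCLM (𝕜 := ℂ) Aᴴ w) =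
      inner ℂ (Matrix.toEuclideanCLM (𝕜 := ℂ) A v) w := by
  rw [← Matrix.star_eq_conjTranspose, map_star, ContinuousLinearMap.star_eq_adjoint,
    ContinuousLinearMap.adjoint_inner_right]

lemma aux_gram {n k : ℕ} (Γ : Matrix (Fin k) (Fin n) ℂ) (v : EuclideanSpace ℂ (Fin n)) :
    (inner ℂ v (Matrix.toEuclideanCLM (𝕜 := ℂ) (Γᴴ * Γ) v)).re =
      ‖Matrix.toEuclideanLin Γ v‖ ^ 2 := by
  have : Matrix.toEuclideanCLM (𝕜 := ℂ) (Γᴴ * Γ) v =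
      Matrix.toEuclideanLin Γᴴ (Matrix.toEuclideanLin Γ v) := by
    ext i; simp [Matrix.toLpLin_apply, Matrix.mulVec_mulVec]
  rw [this, Matrix.toEuclideanLin_conjTranspose_eq_adjoint, LinearMap.adjoint_inner_right]
  simpa using inner_self_eq_norm_sq (𝕜 := ℂ) (Matrix.toEuclideanLin Γ v)

lemma aux_point {n : ℕ} (G S S' : Matrix (Fin n) (Fin n) ℂ) (C₀ lam : ℝ) (hlam : 0 < lam)
    (hC₀ : 0 < C₀)
    (hS : Sᴴ = S) (hb : ‖Matrix.toEuclideanCLM (𝕜 := ℂ) S‖ ≤ C₀)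
    (hpos : (S * G + Gᴴ * S + S' -
        ((2 * lam : ℝ) : ℂ) • (1 : Matrix (Fin n) (Fin n) ℂ)).PosSemidef)
    (v w : EuclideanSpace ℂ (Fin n)) :
    lam * ‖v‖ ^ 2 - C₀ ^ 2 / lam * ‖w - Matrix.toEuclideanCLM (𝕜 := ℂ) G v‖ ^ 2 ≤
      (inner ℂ v (Matrix.toEuclideanCLM (𝕜 := ℂ) S w + Matrix.toEuclideanCLM (𝕜 := ℂ) S' v)
        + inner ℂ w (Matrix.toEuclideanCLM (𝕜 := ℂ) S v)).re := by
  have h := aux_psd hpos v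
  obtain ⟨f, hf⟩ : ∃ f, f = w - Matrix.toEuclideanCLM (𝕜 := ℂ) G v := ⟨_, rfl⟩
  have hw : w = f + Matrix.toEuclideanCLM (𝕜 := ℂ) G v := by rw [hf]; abel
  rw [← hf, hw]
  have h1 : (inner ℂ v (Matrix.toEuclideanCLM (𝕜 := ℂ) S f)).re =
      (inner ℂ f (Matrix.toEuclideanCLM (𝕜 := ℂ) S v)).re := by
    have := aux_adj S v f
    rw [hS] at this
    rw [this]
    exact inner_re_symm (𝕜 := ℂ) _ _
  have h2 : |(inner ℂ f (Matrix.toEuclideanCLM (𝕜 := ℂ) S v)).re| ≤ ‖f‖ * (C₀ * ‖v‖) :=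
    (Complex.abs_re_le_norm _).trans ((norm_inner_le_norm _ _).trans
      (mul_le_mul_of_nonneg_left (ContinuousLinearMap.le_of_opNorm_le _ hb v) (norm_nonneg _)))
  have h3 := (abs_le.1 h2).1
  have h4 : (inner ℂ v v).re = ‖v‖ ^ 2 := inner_self_eq_norm_sq (𝕜 := ℂ) v
  have h5 : (inner ℂ v (Matrix.toEuclideanCLM (𝕜 := ℂ) (((2 * lam : ℝ) : ℂ) • (1 : Matrix (Fin n) (Fin n) ℂ)) v)).re = 2 * lam * ‖v‖ ^ 2 := by
    rw [map_smul, map_one, ContinuousLinearMap.smul_apply, ContinuousLinearMap.one_apply,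
      inner_smul_right, Complex.re_ofReal_mul, h4]
  simp only [map_add, map_sub, map_mul, ContinuousLinearMap.add_apply,
    ContinuousLinearMap.sub_apply, ContinuousLinearMap.mul_apply, inner_add_right,
    inner_sub_right, inner_add_left, Complex.add_re, Complex.sub_re, aux_adj, h5] at h ⊢
  rw [h1]
  have key : 2 * (‖f‖ * (C₀ * ‖v‖)) ≤ lam * ‖v‖ ^ 2 + C₀ ^ 2 / lam * ‖f‖ ^ 2 := by
    have : lam * ‖v‖ ^ 2 + C₀ ^ 2 / lam * ‖f‖ ^ 2 - 2 * (‖f‖ * (C₀ * ‖v‖)) =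
      (lam * ‖v‖ - C₀ * ‖f‖) ^ 2 / lam := by field_simp; ring
    have : 0 ≤ (lam * ‖v‖ - C₀ * ‖f‖) ^ 2 / lam := by positivity
    linarith
  linarith

/-- Lemma 2.1, matrix case. The basic energy estimate produced by a
symmetrizer for a boundary value problem on the half line. -/
theorem symmetrizer_energy_estimate {n k : ℕ}
    (G S S' : ℝ → Matrix (Fin n) (Fin n) ℂ) (Γ : Matrix (Fin k) (Fin n) ℂ)
    (C₀ lam δ C₁ : ℝ) (hC₀ : 0 < C₀) (hlam : 0 < lam) (hδ : 0 < δ) (hC₁ : 0 ≤ C₁)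
    (hGcont : ∀ i j, ContinuousOn (fun x => G x i j) (Ici 0))
    (hSderiv : ∀ i j, ∀ x ∈ Ici (0 : ℝ),
      HasDerivWithinAt (fun y => S y i j) (S' x i j) (Ici 0) x)
    (hS'cont : ∀ i j, ContinuousOn (fun x => S' x i j) (Ici 0))
    (hSsa : ∀ x ∈ Ici (0 : ℝ), (S x)ᴴ = S x)
    (hSbound : ∀ x ∈ Ici (0 : ℝ), ‖Matrix.toEuclideanCLM (𝕜 := ℂ) (S x)‖ ≤ C₀)
    (hpos : ∀ x ∈ Ici (0 : ℝ),
      (S x * G x + (G x)ᴴ * S x + S' x -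
        ((2 * lam : ℝ) : ℂ) • (1 : Matrix (Fin n) (Fin n) ℂ)).PosSemidef)
    (hbdry : (S 0 - ((δ : ℝ) : ℂ) • (1 : Matrix (Fin n) (Fin n) ℂ) +
      ((C₁ : ℝ) : ℂ) • (Γᴴ * Γ)).PosSemidef) :
    ∀ u : ℝ → EuclideanSpace ℂ (Fin n), ContDiff ℝ 1 u → HasCompactSupport u →
      lam * (∫ x in Ici (0 : ℝ), ‖u x‖ ^ 2) + δ * ‖u 0‖ ^ 2 ≤
        (C₀ ^ 2 / lam) *
            (∫ x in Ici (0 : ℝ),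
              ‖deriv u x - Matrix.toEuclideanCLM (𝕜 := ℂ) (G x) (u x)‖ ^ 2) +
          C₁ * ‖Matrix.toEuclideanLin Γ (u 0)‖ ^ 2 := by
  intro u hu hc
  obtain ⟨R, hR0, hR⟩ : ∃ R : ℝ, 0 < R ∧ ∀ x, R ≤ x → u x = 0 ∧ deriv u x = 0 := by
    obtain ⟨R, hR⟩ := (hc.isCompact.isBounded).subset_closedBall 0
    refine ⟨max R 0 + 1, by positivity, fun x hx => ?_⟩
    have : x ∉ tsupport u := fun h => by
      have := hR h
      simp only [Metric.mem_closedBall, dist_zero_right, Real.norm_eq_abs] at this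
      have := le_abs_self x
      have := le_max_left R 0
      linarith
    exact ⟨image_eq_zero_of_notMem_tsupport this,
      image_eq_zero_of_notMem_tsupport fun h => this (tsupport_deriv_subset h)⟩
  have hd : ∀ x, HasDerivAt u (deriv u x) x := fun x =>
    (hu.differentiable one_ne_zero x).hasDerivAt
  have hdc : Continuous (deriv u) := hu.continuous_deriv le_rfl
  set f : ℝ → EuclideanSpace ℂ (Fin n) :=
    fun x => deriv u x - Matrix.toEuclideanCLM (𝕜 := ℂ) (G x) (u x) with hf
  have hfc : ContinuousOn f (Ici 0) :=
    hdc.continuousOn.sub ((aux_cont G _ hGcont).clm_apply hu.continuous.continuousOn)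
  have hder : ∀ x ∈ Ici (0:ℝ), HasDerivWithinAt
      (fun y => (inner ℂ (u y) (Matrix.toEuclideanCLM (𝕜 := ℂ) (S y) (u y))).re)
      ((inner ℂ (u x) (Matrix.toEuclideanCLM (𝕜 := ℂ) (S x) (deriv u x) +
        Matrix.toEuclideanCLM (𝕜 := ℂ) (S' x) (u x))
        + inner ℂ (deriv u x) (Matrix.toEuclideanCLM (𝕜 := ℂ) (S x) (u x))).re) (Ici 0) x := by
    intro x hx
    have := (hd x).hasDerivWithinAt.inner ℂ (aux_deriv S S' (Ici 0) x
      (fun i j => hSderiv i j x hx) u _ (hd x).hasDerivWithinAt)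
    exact Complex.reCLM.hasFDerivAt.comp_hasDerivWithinAt x this
  have hsub : Icc 0 R ⊆ Ici (0:ℝ) := Icc_subset_Ici_self
  have i1 : IntervalIntegrable (fun x => ‖u x‖ ^ 2) MeasureTheory.volume 0 R :=
    (hu.continuous.norm.pow 2).intervalIntegrable _ _
  have i2 : IntervalIntegrable (fun x => ‖f x‖ ^ 2) MeasureTheory.volume 0 R := by
    apply ContinuousOn.intervalIntegrable
    rw [uIcc_of_le hR0.le]
    exact (hfc.mono hsub).norm.pow 2
  have hφ : ContinuousOn (fun x => lam * ‖u x‖ ^ 2 - C₀ ^ 2 / lam * ‖f x‖ ^ 2) (Icc 0 R) :=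
    ((hu.continuous.norm.pow 2).continuousOn.const_mul _).sub
      (((hfc.mono hsub).norm.pow 2).const_mul _)
  have main := intervalIntegral.integral_le_sub_of_hasDeriv_right_of_le hR0.le
    (fun x hx => ((hder x (hsub hx)).continuousWithinAt).mono hsub)
    (fun x hx => (hder x hx.1.le).mono (fun y hy => hx.1.le.trans (le_of_lt hy)))
    (hφ.integrableOn_Icc)
    (fun x hx => aux_point (G x) (S x) (S' x) C₀ lam hlam hC₀ (hSsa x hx.1.le)
      (hSbound x hx.1.le) (hpos x hx.1.le) (u x) (deriv u x))
  rw [intervalIntegral.integral_sub (i1.const_mul _) (i2.const_mul _),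
    intervalIntegral.integral_const_mul, intervalIntegral.integral_const_mul,
    (hR R le_rfl).1] at main
  have conv : ∀ g : ℝ → ℝ, (∀ x, R ≤ x → g x = 0) →
      ∫ x in Ici (0:ℝ), g x = ∫ x in (0:ℝ)..R, g x := by
    intro g hg
    rw [MeasureTheory.integral_Ici_eq_integral_Ioi, intervalIntegral.integral_of_le hR0.le]
    refine MeasureTheory.setIntegral_eq_of_subset_of_forall_diff_eq_zero measurableSet_Ioi
      Ioc_subset_Ioi_self fun x hx => hg x ?_
    by_contra hlt
    exact hx.2 ⟨hx.1, (not_le.1 hlt).le⟩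
  rw [conv (fun x => ‖u x‖ ^ 2) (fun x hx => by simp [(hR x hx).1]),
    conv (fun x => ‖f x‖ ^ 2) (fun x hx => by simp [hf, (hR x hx).1, (hR x hx).2])]
  have hb := aux_psd hbdry (u 0)
  have h4 : (inner ℂ (u 0) (u 0)).re = ‖u 0‖ ^ 2 := inner_self_eq_norm_sq (𝕜 := ℂ) (u 0)
  simp only [map_add, map_sub, map_smul, map_one, ContinuousLinearMap.add_apply,
    ContinuousLinearMap.sub_apply, ContinuousLinearMap.smul_apply,
    ContinuousLinearMap.one_apply, inner_add_right, inner_sub_right, inner_smul_right,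
    Complex.add_re, Complex.sub_re, Complex.re_ofReal_mul, h4, aux_gram] at hb
  simp only [inner_zero_left, Complex.zero_re] at main
  linarith

end
end

section
/- Let G : [0, ∞) → M_n(ℂ) be continuous, G_∞ ∈ M_n(ℂ), and suppose there are C, θ > 0 with ‖G(x) − G_∞‖ ≤ C e^{−θx} for all x ≥ 0. Then there exist θ₁ > 0, C′ > 0 and a C¹ map W : [0, ∞) → GL_n(ℂ) such that: (i) sup_x ‖W(x)‖ < ∞ and sup_x ‖W(x)^{-1}‖ < ∞; (ii) ‖W(x) − Id‖ ≤ C′ e^{−θ₁ x} for all x ≥ 0; (iii) W′(x) = G(x) W(x) − W(x) G_∞ for all x ≥ 0. Consequently the substitution v(x) = W(x)^{-1} u(x) transforms any solution of u′ = G(x)u into a solution of v′ = G_∞ v. -/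
open Matrix Set

noncomputable section
open BoundedContinuousFunction MeasureTheory

lemma scalar_aux {E : Type*} [NormedAddCommGroup E] [NormedSpace ℂ E]
    (g : ℝ →ᵇ E) (μ : ℂ) (hμ : μ.re < 0) (x : ℝ) :
    IntegrableOn (fun s : ℝ => Complex.exp (-μ * s) • g s) (Iic x) := by
  have h := integrableOn_exp_mul_complex_Iic (a := -μ) (by simpa using hμ) x
  refine h.smul_bdd ‖g‖ ?_ ?_
  · exact g.continuous.aestronglyMeasurable
  · exact Filter.Eventually.of_forall (fun s => g.norm_coe_le_norm s)

lemma scalar_neg {E : Type*} [NormedAddCommGroup E] [NormedSpace ℂ E] [CompleteSpace E]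
    (μ : ℂ) (hμ : μ.re < 0) :
    ∃ K : (ℝ →ᵇ E) →L[ℂ] (ℝ →ᵇ E), ‖K‖ ≤ 1 / |μ.re| ∧
      ∀ g x, HasDerivAt (K g) (μ • K g x + g x) x := by
  let w : (ℝ →ᵇ E) → ℝ → E := fun g x =>
    Complex.exp (μ * x) • ∫ s in Iic x, Complex.exp (-μ * s) • g s
  have hderiv : ∀ g x, HasDerivAt (w g) (μ • w g x + g x) x := by
    intro g x
    have hc : Continuous (fun s : ℝ => Complex.exp (-μ * s) • g s) := by
      have := g.continuous
      fun_prop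
    have h1 : HasDerivAt (fun x : ℝ => ∫ s in Iic x, Complex.exp (-μ * s) • g s)
        (Complex.exp (-μ * x) • g x) x := by
      have h2 : (fun x : ℝ => ∫ s in Iic x, Complex.exp (-μ * s) • g s) = fun x =>
          (∫ s in (0:ℝ)..x, Complex.exp (-μ * s) • g s)
            + ∫ s in Iic (0:ℝ), Complex.exp (-μ * s) • g s := by
        funext y
        rw [← intervalIntegral.integral_Iic_sub_Iic (scalar_aux g μ hμ 0) (scalar_aux g μ hμ y)]
        simp
      rw [h2]
      exact (intervalIntegral.integral_hasDerivAt_right (hc.intervalIntegrable _ _)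
        (hc.stronglyMeasurableAtFilter _ _) hc.continuousAt).add_const _
    have h3 : HasDerivAt (fun x : ℝ => Complex.exp (μ * x)) (Complex.exp (μ * x) * μ) x := by
      have : HasDerivAt (fun x : ℝ => μ * (x:ℂ)) μ x := by
        simpa using (Complex.ofRealCLM.hasDerivAt (x := x)).const_mul μ
      exact this.cexp
    have h4 := h3.smul h1
    refine h4.congr_deriv ?_
    simp only [w, smul_smul, ← Complex.exp_add]
    rw [add_comm, mul_comm μ (Complex.exp _)]
    simp
  have hnorm : ∀ g x, ‖w g x‖ ≤ (1 / |μ.re|) * ‖g‖ := by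
    intro g x
    have hm : 0 < -μ.re := by linarith
    have h1 : ‖∫ s in Iic x, Complex.exp (-μ * s) • g s‖ ≤
        ∫ s in Iic x, Real.exp (-μ.re * s) * ‖g‖ := by
      refine norm_integral_le_of_norm_le ((integrableOn_exp_mul_Iic hm x).mul_const _) ?_
      refine Filter.Eventually.of_forall (fun s => ?_)
      rw [norm_smul, Complex.norm_exp]
      have : (-μ * s).re = -μ.re * s := by simp
      rw [this]
      gcongr
      exact g.norm_coe_le_norm s
    rw [integral_mul_const, integral_exp_mul_Iic hm] at h1
    simp only [w]
    rw [norm_smul, Complex.norm_exp]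
    have : (μ * x).re = μ.re * x := by simp
    rw [this, abs_of_neg hμ]
    calc _ ≤ Real.exp (μ.re * x) * (Real.exp (-μ.re * x) / -μ.re * ‖g‖) := by gcongr
      _ = (Real.exp (μ.re * x) * Real.exp (-μ.re * x)) * (1 / -μ.re * ‖g‖) := by ring
      _ = _ := by rw [← Real.exp_add]; simp
  let W : (ℝ →ᵇ E) → (ℝ →ᵇ E) := fun g =>
    BoundedContinuousFunction.ofNormedAddCommGroup (w g)
      (continuous_iff_continuousAt.2 fun x => (hderiv g x).continuousAt) _ (hnorm g)
  let WL : (ℝ →ᵇ E) →ₗ[ℂ] (ℝ →ᵇ E) :=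
    { toFun := W
      map_add' := by
        intro f g
        ext x
        simp only [W, w, coe_ofNormedAddCommGroup, coe_add, Pi.add_apply, smul_add]
        rw [integral_add (scalar_aux f μ hμ x) (scalar_aux g μ hμ x), smul_add]
      map_smul' := by
        intro c f
        ext x
        simp only [W, w, coe_ofNormedAddCommGroup, coe_smul, RingHom.id_apply]
        rw [smul_comm c, ← integral_smul c]
        congr 2
        funext s
        exact smul_comm _ _ _ }
  refine ⟨WL.mkContinuous (1 / |μ.re|) (fun g => ?_), ?_, fun g x => hderiv g x⟩
  · exact norm_ofNormedAddCommGroup_le _ (by positivity) (hnorm g)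
  · exact LinearMap.mkContinuous_norm_le _ (by positivity) _

lemma scalar_all {E : Type*} [NormedAddCommGroup E] [NormedSpace ℂ E] [CompleteSpace E]
    (μ : ℂ) (hμ : μ.re ≠ 0) :
    ∃ K : (ℝ →ᵇ E) →L[ℂ] (ℝ →ᵇ E), ‖K‖ ≤ 1 / |μ.re| ∧
      ∀ g x, HasDerivAt (K g) (μ • K g x + g x) x := by
  rcases lt_or_gt_of_ne hμ with h | h
  · exact scalar_neg μ h
  obtain ⟨K, hK, hd⟩ := scalar_neg (E := E) (-μ) (by simpa using h)
  let ρ : (ℝ →ᵇ E) →ₗ[ℂ] (ℝ →ᵇ E) :=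
    { toFun := fun g => g.compContinuous ⟨fun x => -x, continuous_neg⟩
      map_add' := fun f g => by ext; simp
      map_smul' := fun c f => by ext; simp }
  have hρ : ∀ g, ‖ρ g‖ ≤ 1 * ‖g‖ := fun g => by
    rw [one_mul]
    exact (norm_le (norm_nonneg _)).2 fun x => g.norm_coe_le_norm _
  let r := ρ.mkContinuous 1 hρ
  have hr : ‖r‖ ≤ 1 := LinearMap.mkContinuous_norm_le _ zero_le_one _
  refine ⟨-(r ∘L K ∘L r), ?_, fun g x => ?_⟩
  · rw [norm_neg]
    calc _ ≤ ‖r‖ * ‖K ∘L r‖ := ContinuousLinearMap.opNorm_comp_le _ _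
      _ ≤ ‖r‖ * (‖K‖ * ‖r‖) := by gcongr; exact ContinuousLinearMap.opNorm_comp_le _ _
      _ ≤ 1 * (‖K‖ * 1) := by gcongr
      _ ≤ _ := by simpa using hK
  · have h1 := (hd (r g) (-x)).scomp x (hasDerivAt_neg x)
    have h2 := h1.neg
    have e : ((-(r ∘L K ∘L r)) g : ℝ → E) = -((K (r g) : ℝ → E) ∘ Neg.neg) := by
      ext y; rfl
    rw [e]
    convert h2 using 1
    have e2 : (r g) (-x) = g x := by change g (- -x) = g x; simp
    rw [e2]
    simp [add_comm]

lemma list_solve {E : Type*} [NormedAddCommGroup E] [NormedSpace ℂ E] [CompleteSpace E]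
    (B : E →L[ℂ] E) (l : List ℂ) (hl : ∀ μ ∈ l, μ.re ≠ 0) :
    ∃ K U : (ℝ →ᵇ E) →L[ℂ] (ℝ →ᵇ E), ∀ g x,
      HasDerivAt (K g)
        (B (K g x) + g x - (l.map (fun μ => B - algebraMap ℂ (E →L[ℂ] E) μ)).prod (U g x)) x := by
  induction l with
  | nil =>
    refine ⟨0, ContinuousLinearMap.id _ _, fun g x => ?_⟩
    simp
  | cons μ l ih =>
    obtain ⟨K, U, h⟩ := ih (fun ν hν => hl ν (List.mem_cons_of_mem _ hν))
    obtain ⟨S, -, hS⟩ := scalar_all (E := E) μ (hl μ (by simp))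
    set P := (l.map (fun μ => B - algebraMap ℂ (E →L[ℂ] E) μ)).prod with hP
    refine ⟨K + (P.compLeftContinuousBounded ℝ) ∘L S ∘L U, S ∘L U, fun g x => ?_⟩
    have h1 := (h g x).add ((P.restrictScalars ℝ).hasFDerivAt.comp_hasDerivAt x (hS (U g) x))
    refine h1.congr_deriv ?_
    rw [List.map_cons, List.prod_cons, ← hP]
    simp [Algebra.algebraMap_eq_smul_one]
    abel

lemma contraction_solve {E : Type*} [NormedAddCommGroup E] [NormedSpace ℂ E] [CompleteSpace E]
    (B : E →L[ℂ] E) (K : (ℝ →ᵇ E) →L[ℂ] (ℝ →ᵇ E))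
    (hK : ∀ g x, HasDerivAt (K g) (B (K g x) + g x) x)
    (R : ℝ → E →L[ℂ] E) (hR : Continuous R) (k : ℝ) (hk : ∀ x, ‖R x‖ ≤ k) (hkK : ‖K‖ * k < 1)
    (h : ℝ →ᵇ E) :
    ∃ v : ℝ →ᵇ E, ∀ x, HasDerivAt v (B (v x) + R x (v x) + h x) x := by
  have hk0 : 0 ≤ k := (norm_nonneg _).trans (hk 0)
  have hb : ∀ (v : ℝ →ᵇ E) x, ‖R x (v x)‖ ≤ k * ‖v‖ := fun v x =>
    (R x).le_of_opNorm_le_of_le (hk x) (v.norm_coe_le_norm x)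
  let M : (ℝ →ᵇ E) → (ℝ →ᵇ E) := fun v =>
    BoundedContinuousFunction.ofNormedAddCommGroup (fun x => R x (v x))
      (hR.clm_apply v.continuous) _ (hb v)
  have hM : ∀ v w, ‖M v - M w‖ ≤ k * ‖v - w‖ := by
    intro v w
    refine (norm_le (by positivity)).2 fun x => ?_
    have := hb (v - w) x
    simpa [M] using this
  have hc : ContractingWith (Real.toNNReal (‖K‖ * k)) (fun v => K (M v + h)) := by
    refine ⟨by simpa using hkK, LipschitzWith.of_dist_le_mul fun v w => ?_⟩
    rw [dist_eq_norm, dist_eq_norm, ← map_sub, Real.coe_toNNReal _ (by positivity)]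
    refine (K.le_opNorm _).trans ?_
    rw [mul_assoc]
    gcongr
    simpa using hM v w
  refine ⟨hc.fixedPoint, fun x => ?_⟩
  have hf : K (M hc.fixedPoint + h) = hc.fixedPoint := hc.fixedPoint_isFixedPt
  have := hK (M hc.fixedPoint + h) x
  rw [hf] at this
  convert this using 1
  simp [M, add_assoc]

lemma shift_solve {E : Type*} [NormedAddCommGroup E] [NormedSpace ℂ E] [FiniteDimensional ℂ E]
    [CompleteSpace E]
    (A : E →L[ℂ] E) (θ : ℝ) (hθ : 0 < θ) :
    ∃ α : ℝ, 0 < α ∧ α < θ ∧ ∃ K : (ℝ →ᵇ E) →L[ℂ] (ℝ →ᵇ E),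
      ∀ g x, HasDerivAt (K g) ((A + algebraMap ℂ (E →L[ℂ] E) α) (K g x) + g x) x := by
  have hi : IsIntegral ℂ A := Algebra.IsIntegral.isIntegral A
  have hs : (minpoly ℂ A).Splits := IsAlgClosed.splits _
  set l := (minpoly ℂ A).roots.toList with hl
  have hp : (l.map (fun μ => A - algebraMap ℂ (E →L[ℂ] E) μ)).prod = 0 := by
    have h1 := minpoly.aeval ℂ A
    rw [hs.eq_prod_roots_of_monic (minpoly.monic hi), ← Multiset.coe_toList (minpoly ℂ A).roots,
      Multiset.map_coe, Multiset.prod_coe, map_list_prod, List.map_map] at h1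
    rw [← h1]
    congr 2
    funext μ
    simp
  obtain ⟨α, hα, hα'⟩ := ((Ioo_infinite hθ).sdiff
    (Set.Finite.image (fun μ : ℂ => -μ.re) l.toFinset.finite_toSet)).nonempty
  refine ⟨α, hα.1, hα.2, ?_⟩
  obtain ⟨K, U, h⟩ := list_solve (A + algebraMap ℂ (E →L[ℂ] E) α) (l.map (fun μ => μ + α)) (by
    intro ν hν
    obtain ⟨μ, hμ, rfl⟩ := List.mem_map.1 hν
    intro h0
    refine hα' ⟨μ, by simpa using hμ, ?_⟩
    simp at h0 ⊢
    linarith)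
  refine ⟨K, fun g x => ?_⟩
  have := h g x
  rw [List.map_map] at this
  have e : (fun μ => A + algebraMap ℂ (E →L[ℂ] E) α - algebraMap ℂ (E →L[ℂ] E) μ) ∘
      (fun μ : ℂ => μ + α) = (fun μ => A - algebraMap ℂ (E →L[ℂ] E) μ) := by
    funext μ
    simp
  rw [e, hp] at this
  simpa using this

lemma exp_weight {E : Type*} [NormedAddCommGroup E] [NormedSpace ℝ E]
    (v : ℝ → E) (v' : E) (L x : ℝ) (h : HasDerivAt v v' x) :
    HasDerivAt (fun x => Real.exp (-L * x) • v x)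
      (Real.exp (-L * x) • (v' - L • v x)) x := by
  have h3 : HasDerivAt (fun x : ℝ => Real.exp (-L * x)) (Real.exp (-L * x) * -L) x := by
    have : HasDerivAt (fun x : ℝ => -L * x) (-L) x := by
      simpa using (hasDerivAt_id x).const_mul (-L)
    exact this.exp
  refine (h3.smul h).congr_deriv ?_
  simp only [smul_sub, smul_smul, mul_neg, neg_smul]
  abel

lemma conj_exists {𝔸 : Type*} [NormedRing 𝔸] [NormedAlgebra ℂ 𝔸] [FiniteDimensional ℂ 𝔸]
    [CompleteSpace 𝔸] (r : ℝ → 𝔸) (hr : Continuous r) (a : 𝔸) (C θ : ℝ) (hC : 0 < C) (hθ : 0 < θ)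
    (hdecay : ∀ x, 0 ≤ x → ‖r x‖ ≤ C * Real.exp (-θ * x)) (hb : ∀ x, ‖r x‖ ≤ C) :
    ∃ α > (0:ℝ), ∃ C' > (0:ℝ), ∃ W : ℝ → 𝔸,
      (∀ x, 0 ≤ x → ‖W x - 1‖ ≤ C' * Real.exp (-α * x)) ∧
      ∀ x, 0 ≤ x → HasDerivAt W (a * W x - W x * a + r x * W x) x := by
  let A : 𝔸 →L[ℂ] 𝔸 := ContinuousLinearMap.mul ℂ 𝔸 a - (ContinuousLinearMap.mul ℂ 𝔸).flip a
  have hA : ∀ v, A v = a * v - v * a := fun v => rfl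
  obtain ⟨α, hα, hαθ, K, hK⟩ := shift_solve A θ hθ
  -- choice of M
  obtain ⟨M, hM0, hM⟩ : ∃ M : ℝ, 0 ≤ M ∧ ‖K‖ * (C * Real.exp (-θ * M)) < 1 := by
    have ht : Filter.Tendsto (fun M : ℝ => ‖K‖ * (C * Real.exp (-θ * M))) Filter.atTop
        (nhds (‖K‖ * (C * 0))) := by
      refine Filter.Tendsto.const_mul _ (Filter.Tendsto.const_mul _ ?_)
      exact Real.tendsto_exp_atBot.comp
        (Filter.tendsto_id.const_mul_atTop_of_neg (by linarith))
    have h1 := ht.eventually_lt_const (u := 1) (by simp)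
    obtain ⟨M, h2, h3⟩ := (h1.and (Filter.eventually_ge_atTop 0)).exists
    exact ⟨M, h3, h2⟩
  let rM : ℝ → 𝔸 := fun x => r (max x M)
  have hrM : Continuous rM := hr.comp (continuous_id.max continuous_const)
  have hrMb : ∀ x, ‖rM x‖ ≤ C * Real.exp (-θ * M) := fun x => by
    refine (hdecay _ (hM0.trans (le_max_right _ _))).trans ?_
    have := le_max_right x M
    gcongr ?_ * Real.exp ?_
    nlinarith
  let h1 : ℝ →ᵇ 𝔸 := BoundedContinuousFunction.ofNormedAddCommGroup
    (fun x => Real.exp (α * max x M) • r (max x M)) (by fun_prop) C (by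
      intro x
      have h0 : 0 ≤ max x M := hM0.trans (le_max_right _ _)
      rw [norm_smul, Real.norm_eq_abs, Real.abs_exp]
      calc _ ≤ Real.exp (α * max x M) * (C * Real.exp (-θ * max x M)) := by
            gcongr; exact hdecay _ h0
        _ = C * Real.exp (α * max x M + -θ * max x M) := by rw [Real.exp_add]; ring
        _ ≤ C * 1 := by
            gcongr
            rw [Real.exp_le_one_iff]
            nlinarith
        _ = C := mul_one C)
  obtain ⟨v, hv⟩ := contraction_solve (A + algebraMap ℂ (𝔸 →L[ℂ] 𝔸) α) K hK
    (fun x => ContinuousLinearMap.mul ℂ 𝔸 (rM x)) (by fun_prop) (C * Real.exp (-θ * M))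
    (fun x => (ContinuousLinearMap.opNorm_mul_apply_le ℂ 𝔸 _).trans (hrMb x)) hM h1
  let V : ℝ → 𝔸 := fun x => Real.exp (-α * x) • v x
  have hV : ∀ x, HasDerivAt V (A (V x) + rM x * V x + Real.exp (-α * x) • h1 x) x := by
    intro x
    refine (exp_weight _ _ α x (hv x)).congr_deriv ?_
    have e1 : A (V x) = Real.exp (-α * x) • A (v x) := by
      simp only [hA, V, mul_smul_comm, smul_mul_assoc, smul_sub]
    have e2 : rM x * V x = Real.exp (-α * x) • (rM x * v x) := by
      simp only [V, mul_smul_comm]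
    rw [e1, e2, ← smul_add, ← smul_add]
    congr 1
    have e3 : (algebraMap ℂ (𝔸 →L[ℂ] 𝔸) α) (v x) = α • v x := by
      simp [Algebra.algebraMap_eq_smul_one]
    rw [_root_.add_apply, e3, ContinuousLinearMap.mul_apply']
    abel
  have hVc : Continuous V := continuous_iff_continuousAt.2 fun x => (hV x).continuousAt
  -- second phase
  set L : ℝ := ‖A‖ + C + 1 + α with hL
  have hA0 := norm_nonneg A
  have hLpos : 0 < L := by linarith
  obtain ⟨S, hSn, hS⟩ := scalar_all (E := 𝔸) (L : ℂ) (by simpa using hLpos.ne')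
  let h : ℝ → 𝔸 := fun x => (r x - rM x) * V x + r x - Real.exp (-α * x) • h1 x
  have hh : Continuous h := by
    have := h1.continuous
    fun_prop
  have hhM : ∀ x, M ≤ x → h x = 0 := by
    intro x hx
    have e : Real.exp (-α * x) * Real.exp (α * x) = 1 := by rw [← Real.exp_add]; simp
    simp [h, rM, h1, max_eq_left hx, smul_smul]
    rw [← Real.exp_add]; simp
  let p : ℝ → 𝔸 := fun x => Real.exp (L * x) • h x
  have hp : Continuous p := by fun_prop
  let q : ℝ →ᵇ 𝔸 := (BoundedContinuousFunction.mkOfCompact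
    (⟨fun x : Icc 0 M => p x, by fun_prop⟩ : C(Icc 0 M, 𝔸))).compContinuous
      ⟨projIcc 0 M hM0, continuous_projIcc⟩
  have hq : ∀ x, 0 ≤ x → q x = p x := by
    intro x hx
    change p (projIcc 0 M hM0 x) = p x
    rcases le_total x M with h' | h'
    · rw [projIcc_of_mem hM0 ⟨hx, h'⟩]
    · rw [projIcc_of_right_le hM0 h']
      simp [p, hhM x h', hhM M le_rfl]
  obtain ⟨y, hy⟩ := contraction_solve (algebraMap ℂ (𝔸 →L[ℂ] 𝔸) L) S
    (fun g x => by simpa [Algebra.algebraMap_eq_smul_one] using hS g x)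
    (fun x => A + ContinuousLinearMap.mul ℂ 𝔸 (r x)) (by fun_prop) (‖A‖ + C)
    (fun x => (norm_add_le _ _).trans (add_le_add le_rfl
      ((ContinuousLinearMap.opNorm_mul_apply_le ℂ 𝔸 _).trans (hb x)))) (by
      have : ‖S‖ ≤ 1 / L := by simpa [abs_of_pos hLpos] using hSn
      calc ‖S‖ * (‖A‖ + C) ≤ 1 / L * (‖A‖ + C) := by gcongr
        _ < 1 := by rw [one_div, inv_mul_lt_iff₀ hLpos]; linarith) q
  let z : ℝ → 𝔸 := fun x => Real.exp (-L * x) • y x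
  have hz : ∀ x, 0 ≤ x → HasDerivAt z (A (z x) + r x * z x + h x) x := by
    intro x hx
    refine (exp_weight _ _ L x (hy x)).congr_deriv ?_
    have e1 : A (z x) = Real.exp (-L * x) • A (y x) := by
      simp only [hA, z, mul_smul_comm, smul_mul_assoc, smul_sub]
    have e2 : r x * z x = Real.exp (-L * x) • (r x * y x) := by
      simp only [z, mul_smul_comm]
    have e4 : h x = Real.exp (-L * x) • q x := by
      rw [hq x hx]
      simp only [p, smul_smul, ← Real.exp_add]
      simp
    rw [e1, e2, e4, ← smul_add, ← smul_add]
    congr 1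
    have e3 : (algebraMap ℂ (𝔸 →L[ℂ] 𝔸) L) (y x) = L • y x := by
      simp [Algebra.algebraMap_eq_smul_one]
    rw [_root_.add_apply, e3, ContinuousLinearMap.mul_apply']
    abel
  refine ⟨α, hα, ‖v‖ + ‖y‖ + 1, by positivity, fun x => 1 + V x + z x, fun x hx => ?_,
    fun x hx => ?_⟩
  · have e : 1 + V x + z x - 1 = V x + z x := by abel
    rw [e]
    have b1 : ‖V x‖ ≤ Real.exp (-α * x) * ‖v‖ := by
      simp only [V]
      rw [norm_smul, Real.norm_eq_abs, Real.abs_exp]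
      gcongr
      exact v.norm_coe_le_norm x
    have b2 : ‖z x‖ ≤ Real.exp (-α * x) * ‖y‖ := by
      simp only [z]
      rw [norm_smul, Real.norm_eq_abs, Real.abs_exp]
      have : -L * x ≤ -α * x := by nlinarith
      gcongr
      exact y.norm_coe_le_norm x
    refine (norm_add_le _ _).trans ?_
    have := Real.exp_pos (-α * x)
    nlinarith
  · refine (((hV x).const_add 1).add (hz x hx)).congr_deriv ?_
    simp only [hA, h]
    noncomm_ring

lemma conj_unit {𝔸 : Type*} [NormedRing 𝔸] [NormedAlgebra ℂ 𝔸] [FiniteDimensional ℂ 𝔸]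
    [CompleteSpace 𝔸] (g : ℝ → 𝔸) (a : 𝔸) (D : ℝ) (hg : ∀ x, ‖g x‖ ≤ D) (W : ℝ → 𝔸)
    (hW : ∀ x, 0 ≤ x → HasDerivAt W (g x * W x - W x * a) x)
    (hlim : Filter.Tendsto W Filter.atTop (nhds 1)) (x₀ : ℝ) (hx₀ : 0 ≤ x₀) : IsUnit (W x₀) := by
  by_contra hn
  have hninj : ¬ Function.Injective (LinearMap.mulLeft ℂ (W x₀)) := by
    intro hi
    obtain ⟨s, hs⟩ := LinearMap.injective_iff_surjective.1 hi 1
    have : IsNoetherianRing 𝔸 := isNoetherian_of_tower ℂ inferInstance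
    exact hn (IsUnit.of_mul_eq_one s hs)
  obtain ⟨P, hP, hP0⟩ : ∃ P : 𝔸, W x₀ * P = 0 ∧ P ≠ 0 := by
    rw [injective_iff_map_eq_zero] at hninj
    push Not at hninj
    exact hninj
  obtain ⟨X, hXu, hX⟩ := ((hlim.eventually (Units.isOpen.mem_nhds isUnit_one)).and
    (Filter.eventually_ge_atTop x₀)).exists
  let Y : ℝ → 𝔸 := fun x => W x * (NormedSpace.exp ((x - x₀) • a) * P)
  have hY : ∀ x, 0 ≤ x → HasDerivAt Y (g x * Y x) x := by
    intro x hx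
    have h1 : HasDerivAt (fun x : ℝ => NormedSpace.exp ((x - x₀) • a))
        (a * NormedSpace.exp ((x - x₀) • a)) x := by
      have := (hasDerivAt_exp_smul_const' (𝕂 := ℝ) a (x - x₀)).comp_sub_const x x₀
      exact this
    refine ((hW x hx).mul (h1.mul_const P)).congr_deriv ?_
    simp only [Y]
    noncomm_ring
  have hu : EqOn Y (fun _ => 0) (Icc x₀ X) := by
    refine ODE_solution_unique_of_mem_Icc_right (v := fun t y => g t * y) (s := fun _ => univ)
      (K := Real.toNNReal D) ?_ ?_ ?_ (by simp) continuousOn_const ?_ (by simp) ?_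
    · intro t _
      refine LipschitzWith.lipschitzOnWith (LipschitzWith.of_dist_le_mul fun u w => ?_)
      rw [dist_eq_norm, dist_eq_norm, ← mul_sub,
        Real.coe_toNNReal _ ((norm_nonneg _).trans (hg 0))]
      exact (norm_mul_le _ _).trans (by gcongr; exact hg t)
    · exact fun t ht => (hY t (hx₀.trans ht.1)).continuousAt.continuousWithinAt
    · exact fun t ht => (hY t (hx₀.trans ht.1)).hasDerivWithinAt
    · intro t _
      simpa using hasDerivWithinAt_const t (Ici t) (0 : 𝔸)
    · simp [Y, hP]
  have h0 : Y X = 0 := hu ⟨hX, le_rfl⟩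
  have hXu : IsUnit (W X) := hXu
  have h1 := (hXu.mul_right_eq_zero).1 h0
  let _ : NormedAlgebra ℚ 𝔸 := NormedAlgebra.restrictScalars ℚ ℂ 𝔸
  exact hP0 (((NormedSpace.isUnit_exp ((X - x₀) • a)).mul_right_eq_zero).1 h1)

lemma conj_inv_bdd {𝔸 : Type*} [NormedRing 𝔸] [CompleteSpace 𝔸] (W : ℝ → 𝔸)
    (hW : ∀ x, 0 ≤ x → ContinuousAt W x) (hu : ∀ x, 0 ≤ x → IsUnit (W x))
    (hlim : Filter.Tendsto W Filter.atTop (nhds 1)) :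
    ∃ K, ∀ x, 0 ≤ x → ‖Ring.inverse (W x)‖ ≤ K := by
  have hi : ∀ x, 0 ≤ x → ContinuousAt (fun x => Ring.inverse (W x)) x := by
    intro x hx
    obtain ⟨u, hu⟩ := hu x hx
    refine ContinuousAt.comp (g := (Ring.inverse : 𝔸 → 𝔸)) (f := W) ?_ (hW x hx)
    rw [← hu]
    exact NormedRing.inverse_continuousAt u
  have hl : Filter.Tendsto (fun x => Ring.inverse (W x)) Filter.atTop (nhds 1) := by
    have := (NormedRing.inverse_continuousAt (1 : 𝔸ˣ)).tendsto.comp hlim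
    simpa using! this
  have hev := hl.norm.eventually_lt_const (lt_add_one ‖(1:𝔸)‖)
  obtain ⟨X, hX⟩ := Filter.eventually_atTop.1 hev
  obtain ⟨B, hB⟩ := (isCompact_Icc (a := (0:ℝ)) (b := X)).exists_bound_of_continuousOn
    (f := fun x => Ring.inverse (W x)) (fun x hx => (hi x hx.1).continuousWithinAt)
  refine ⟨max B (‖(1:𝔸)‖ + 1), fun x hx => ?_⟩
  rcases le_total x X with h | h
  · exact (hB x ⟨hx, h⟩).trans (le_max_left _ _)
  · exact (hX x h).le.trans (le_max_right _ _)

lemma conj_inv_deriv {𝔸 : Type*} [NormedRing 𝔸] [NormedAlgebra ℂ 𝔸] [CompleteSpace 𝔸]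
    (g a : 𝔸) (W : ℝ → 𝔸) (x : ℝ) (hW : HasDerivAt W (g * W x - W x * a) x) (hu : IsUnit (W x)) :
    HasDerivAt (fun x => Ring.inverse (W x))
      (a * Ring.inverse (W x) - Ring.inverse (W x) * g) x := by
  obtain ⟨u, hu⟩ := hu
  have h1 : HasFDerivAt Ring.inverse (-ContinuousLinearMap.mulLeftRight ℝ 𝔸 ↑u⁻¹ ↑u⁻¹) (W x) := by
    rw [← hu]; exact hasFDerivAt_ringInverse u
  refine (h1.comp_hasDerivAt x hW).congr_deriv ?_
  rw [← hu]
  simp only [Ring.inverse_unit, _root_.neg_apply,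
    ContinuousLinearMap.mulLeftRight_apply, mul_sub, sub_mul]
  simp [mul_assoc]

/-- Lemma 2.2. Conjugation of a variable-coefficient linear system with
exponentially convergent coefficients to its constant-coefficient limit. -/
theorem conjugation_to_constant_coefficients {n : ℕ}
    (G : ℝ → Matrix (Fin n) (Fin n) ℂ) (Ginf : Matrix (Fin n) (Fin n) ℂ)
    (hGcont : ∀ i j, ContinuousOn (fun x => G x i j) (Ici 0))
    (C θ : ℝ) (hC : 0 < C) (hθ : 0 < θ)
    (hdecay : ∀ x ∈ Ici (0 : ℝ),
      ‖Matrix.toEuclideanCLM (𝕜 := ℂ) (G x - Ginf)‖ ≤ C * Real.exp (-θ * x)) :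
    ∃ θ₁ > (0 : ℝ), ∃ C' > (0 : ℝ), ∃ W : ℝ → Matrix (Fin n) (Fin n) ℂ,
      (∀ x ∈ Ici (0 : ℝ), IsUnit (W x)) ∧
      (∃ K : ℝ, ∀ x ∈ Ici (0 : ℝ),
        ‖Matrix.toEuclideanCLM (𝕜 := ℂ) (W x)‖ ≤ K ∧
        ‖Matrix.toEuclideanCLM (𝕜 := ℂ) ((W x)⁻¹)‖ ≤ K) ∧
      (∀ x ∈ Ici (0 : ℝ),
        ‖Matrix.toEuclideanCLM (𝕜 := ℂ) (W x - (1 : Matrix (Fin n) (Fin n) ℂ))‖ ≤ C' * Real.exp (-θ₁ * x)) ∧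
      (∀ i j, ∀ x ∈ Ici (0 : ℝ),
        HasDerivWithinAt (fun y => W y i j) ((G x * W x - W x * Ginf) i j) (Ici 0) x) ∧
      ∀ u : ℝ → Fin n → ℂ,
        (∀ x ∈ Ici (0 : ℝ), ∀ i,
          HasDerivWithinAt (fun y => u y i) ((G x).mulVec (u x) i) (Ici 0) x) →
        ∀ x ∈ Ici (0 : ℝ), ∀ i,
          HasDerivWithinAt (fun y => ((W y)⁻¹).mulVec (u y) i)
            (Ginf.mulVec (((W x)⁻¹).mulVec (u x)) i) (Ici 0) x := by
  let T := Matrix.toEuclideanCLM (n := Fin n) (𝕜 := ℂ)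
  have hTc : Continuous T :=
    LinearMap.continuous_of_finiteDimensional
      (T.toAlgEquiv.toLinearMap : Matrix (Fin n) (Fin n) ℂ →ₗ[ℂ] _)
  let g : ℝ → (EuclideanSpace ℂ (Fin n) →L[ℂ] EuclideanSpace ℂ (Fin n)) :=
    fun x => T (G (max x 0))
  have hg : Continuous g := by
    refine hTc.comp (continuous_matrix fun i j => ?_)
    exact (hGcont i j).comp_continuous (by fun_prop) (fun x => le_max_right x 0)
  have hgx : ∀ x, 0 ≤ x → g x = T (G x) := fun x hx => by simp [g, max_eq_left hx]
  have hdec : ∀ x, 0 ≤ x → ‖g x - T Ginf‖ ≤ C * Real.exp (-θ * x) := fun x hx => by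
    rw [hgx x hx, ← map_sub]
    exact hdecay x hx
  have hb : ∀ x, ‖g x - T Ginf‖ ≤ C := fun x => by
    have h0 : (0:ℝ) ≤ max x 0 := le_max_right _ _
    have h1 := hdecay (max x 0) h0
    rw [map_sub] at h1
    refine h1.trans ?_
    have : Real.exp (-θ * max x 0) ≤ 1 := by
      rw [Real.exp_le_one_iff]; nlinarith
    nlinarith
  obtain ⟨α, hα, C', hC', W, hWd, hW'⟩ := conj_exists (fun x => g x - T Ginf)
    (hg.sub continuous_const) (T Ginf) C θ hC hθ hdec hb
  have hW : ∀ x, 0 ≤ x → HasDerivAt W (g x * W x - W x * T Ginf) x := fun x hx =>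
    (hW' x hx).congr_deriv (by rw [sub_mul]; abel)
  have hlim : Filter.Tendsto W Filter.atTop (nhds 1) := by
    rw [tendsto_iff_norm_sub_tendsto_zero]
    refine squeeze_zero' (Filter.Eventually.of_forall fun _ => norm_nonneg _)
      ((Filter.eventually_ge_atTop 0).mono hWd) ?_
    have ht : Filter.Tendsto (fun M : ℝ => C' * Real.exp (-α * M)) Filter.atTop
        (nhds (C' * 0)) := by
      refine Filter.Tendsto.const_mul _ ?_
      exact Real.tendsto_exp_atBot.comp
        (Filter.tendsto_id.const_mul_atTop_of_neg (by linarith))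
    simpa using ht
  have hu : ∀ x, 0 ≤ x → IsUnit (W x) := conj_unit g (T Ginf) (C + ‖T Ginf‖) (fun x => by
    have := norm_add_le (g x - T Ginf) (T Ginf)
    rw [sub_add_cancel] at this
    linarith [hb x]) W hW hlim
  obtain ⟨K, hK⟩ := conj_inv_bdd W (fun x hx => (hW x hx).continuousAt) hu hlim
  have hinv : ∀ x, 0 ≤ x → (T.symm (W x))⁻¹ = T.symm (Ring.inverse (W x)) := fun x hx => by
    refine Matrix.inv_eq_right_inv ?_
    rw [← map_mul, Ring.mul_inverse_cancel _ (hu x hx), map_one]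
  have hent : ∀ i j (F : ℝ → (EuclideanSpace ℂ (Fin n) →L[ℂ] EuclideanSpace ℂ (Fin n))) F' x,
      HasDerivAt F F' x → HasDerivAt (fun y => T.symm (F y) i j) (T.symm F' i j) x := by
    intro i j F F' x h
    let φ : (EuclideanSpace ℂ (Fin n) →L[ℂ] EuclideanSpace ℂ (Fin n)) →ₗ[ℂ] ℂ :=
      { toFun := fun v => T.symm v i j
        map_add' := fun v w => by simp
        map_smul' := fun c v => by simp }
    exact ((φ.toContinuousLinearMap).restrictScalars ℝ).hasFDerivAt.comp_hasDerivAt x h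
  have hTT : ∀ v, T (T.symm v) = v := fun v => T.apply_symm_apply v
  have hTT' : ∀ v, T.symm (T v) = v := fun v => T.symm_apply_apply v
  refine ⟨α, hα, C', hC', fun x => T.symm (W x), fun x hx => (hu x hx).map T.symm,
    ⟨max (‖(1 : EuclideanSpace ℂ (Fin n) →L[ℂ] EuclideanSpace ℂ (Fin n))‖ + C') K,
      fun x hx => ⟨?_, ?_⟩⟩, fun x hx => ?_, fun i j x hx => ?_, fun u hud x hx i => ?_⟩
  · change ‖T (T.symm (W x))‖ ≤ _
    rw [hTT]
    refine le_trans ?_ (le_max_left _ _)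
    have h1 := norm_add_le 1 (W x - 1)
    rw [add_sub_cancel] at h1
    have h2 := hWd x hx
    have h0 : (0:ℝ) ≤ x := hx
    have : Real.exp (-α * x) ≤ 1 := by
      rw [Real.exp_le_one_iff]; nlinarith
    nlinarith
  · change ‖T ((T.symm (W x))⁻¹)‖ ≤ _
    rw [hinv x hx, hTT]
    exact (hK x hx).trans (le_max_right _ _)
  · change ‖T (T.symm (W x) - 1)‖ ≤ _
    rw [map_sub, hTT, map_one]
    exact hWd x hx
  · refine (hent i j W _ x (hW x hx)).hasDerivWithinAt.congr_deriv ?_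
    rw [map_sub, map_mul, map_mul, hgx x hx, hTT', hTT']
  · have hd : ∀ j, HasDerivAt (fun y => T.symm (Ring.inverse (W y)) i j)
        ((Ginf * T.symm (Ring.inverse (W x)) - T.symm (Ring.inverse (W x)) * G x) i j) x := by
      intro j
      refine (hent i j _ _ x (conj_inv_deriv _ _ W x (hW x hx) (hu x hx))).congr_deriv ?_
      rw [map_sub, map_mul, map_mul, hgx x hx, hTT', hTT']
    have hs := HasDerivWithinAt.fun_sum (u := Finset.univ)
      (fun j _ => ((hd j).hasDerivWithinAt (s := Ici 0)).mul (hud x hx j))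
    have hs2 := hs.congr_of_mem (f₁ := fun y => ((T.symm (W y))⁻¹).mulVec (u y) i) (by
      intro y hy
      simp only [hinv y hy]
      rfl) hx
    refine hs2.congr_deriv ?_
    rw [hinv x hx, Finset.sum_add_distrib]
    change ((Ginf * T.symm (Ring.inverse (W x)) - T.symm (Ring.inverse (W x)) * G x).mulVec (u x)) i
      + (T.symm (Ring.inverse (W x))).mulVec ((G x).mulVec (u x)) i = _
    rw [Matrix.sub_mulVec, Pi.sub_apply, Matrix.mulVec_mulVec, Matrix.mulVec_mulVec]
    ring

end
end

section
/- Under Assumptions (H0)–(H3), for every p ∈ 𝒪 and every ζ = (τ, η, γ) ∈ ℝ^{d+1} with ζ ≠ 0 and γ ≥ 0, the matrix 𝒢(p, ζ) has no purely imaginary eigenvalue, and, counted with algebraic multiplicity, it has exactly N eigenvalues with Re μ > 0 and exactly N eigenvalues with Re μ < 0. -/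
open Matrix Complex
open scoped ContDiff

noncomputable section

/-- Real matrix mapped to a complex matrix. -/
def cmap {N : ℕ} (A : Matrix (Fin N) (Fin N) ℝ) : Matrix (Fin N) (Fin N) ℂ :=
  A.map (fun x => (x : ℂ))

/-- Frequency variable `ζ = (τ, η, γ) ∈ ℝ × ℝ^{d-1} × ℝ` (here `d = m + 1`). -/
abbrev Freq (m : ℕ) := ℝ × (Fin m → ℝ) × ℝ

/-- The block `𝒜(p, ζ)`. -/
def calA {N m : ℕ} (A : Fin (m + 1) → Matrix (Fin N) (Fin N) ℝ)
    (B : Fin (m + 1) → Fin (m + 1) → Matrix (Fin N) (Fin N) ℝ) (ζ : Freq m) :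
    Matrix (Fin N) (Fin N) ℂ :=
  (cmap (B (Fin.last m) (Fin.last m)))⁻¹ *
    (cmap (A (Fin.last m)) -
      ∑ j : Fin m, (Complex.I * (ζ.2.1 j : ℂ)) •
        (cmap (B j.castSucc (Fin.last m)) + cmap (B (Fin.last m) j.castSucc)))

/-- The block `ℳ(p, ζ)`. -/
def calM {N m : ℕ} (A : Fin (m + 1) → Matrix (Fin N) (Fin N) ℝ)
    (B : Fin (m + 1) → Fin (m + 1) → Matrix (Fin N) (Fin N) ℝ) (ζ : Freq m) :
    Matrix (Fin N) (Fin N) ℂ :=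
  (cmap (B (Fin.last m) (Fin.last m)))⁻¹ *
    ((Complex.I * (ζ.1 : ℂ) + (ζ.2.2 : ℂ)) • (1 : Matrix (Fin N) (Fin N) ℂ) +
      ∑ j : Fin m, (Complex.I * (ζ.2.1 j : ℂ)) • cmap (A j.castSucc) +
      ∑ j : Fin m, ∑ k : Fin m, ((ζ.2.1 j * ζ.2.1 k : ℝ) : ℂ) • cmap (B j.castSucc k.castSucc))

/-- The full `2N × 2N` matrix `𝒢(p, ζ) = [[0, Id], [ℳ, 𝒜]]`. -/
def calG {N m : ℕ} (A : Fin (m + 1) → Matrix (Fin N) (Fin N) ℝ)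
    (B : Fin (m + 1) → Fin (m + 1) → Matrix (Fin N) (Fin N) ℝ) (ζ : Freq m) :
    Matrix (Fin N ⊕ Fin N) (Fin N ⊕ Fin N) ℂ :=
  Matrix.fromBlocks 0 1 (calM A B ζ) (calA A B ζ)

/-- The generalized eigenspace of `f` for eigenvalues of negative real part. -/
def stableSubspace {E : Type*} [AddCommGroup E] [Module ℂ E] (f : Module.End ℂ E) :
    Submodule ℂ E :=
  ⨆ μ ∈ {μ : ℂ | μ.re < 0}, f.maxGenEigenspace μ

/-- The generalized eigenspace of `f` for eigenvalues of positive real part. -/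
def unstableSubspace {E : Type*} [AddCommGroup E] [Module ℂ E] (f : Module.End ℂ E) :
    Submodule ℂ E :=
  ⨆ μ ∈ {μ : ℂ | 0 < μ.re}, f.maxGenEigenspace μ

/-- (H0): the coefficients are `C^∞` functions on `𝒪`. -/
def HypH0 {M N m : ℕ} (𝒪 : Set (Fin M → ℝ))
    (A : Fin (m + 1) → (Fin M → ℝ) → Matrix (Fin N) (Fin N) ℝ)
    (B : Fin (m + 1) → Fin (m + 1) → (Fin M → ℝ) → Matrix (Fin N) (Fin N) ℝ) : Prop :=
  (∀ j i k, ContDiffOn ℝ ∞ (fun p => A j p i k) 𝒪) ∧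
    (∀ j l i k, ContDiffOn ℝ ∞ (fun p => B j l p i k) 𝒪)

/-- (H1): for `p ∈ 𝒪` and `ξ ≠ 0`, the eigenvalues of `Σ ξ_j A_j(p)` are real and
semisimple, with multiplicities independent of `(p, ξ)`. -/
def HypH1 {M N m : ℕ} (𝒪 : Set (Fin M → ℝ))
    (A : Fin (m + 1) → (Fin M → ℝ) → Matrix (Fin N) (Fin N) ℝ) : Prop :=
  ∃ mult : Multiset ℕ, ∀ p ∈ 𝒪, ∀ ξ : Fin (m + 1) → ℝ, ξ ≠ 0 →
    (∀ μ ∈ spectrum ℂ (cmap (∑ j, ξ j • A j p)), μ.im = 0) ∧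
    (∀ μ : ℂ, Module.End.eigenspace (Matrix.toLin' (cmap (∑ j, ξ j • A j p))) μ =
      Module.End.maxGenEigenspace (Matrix.toLin' (cmap (∑ j, ξ j • A j p))) μ) ∧
    (((cmap (∑ j, ξ j • A j p)).charpoly.roots.dedup.map
        fun μ => (cmap (∑ j, ξ j • A j p)).charpoly.roots.count μ) = mult)

/-- (H2): uniform parabolicity. -/
def HypH2 {M N m : ℕ} (𝒪 : Set (Fin M → ℝ))
    (A : Fin (m + 1) → (Fin M → ℝ) → Matrix (Fin N) (Fin N) ℝ)
    (B : Fin (m + 1) → Fin (m + 1) → (Fin M → ℝ) → Matrix (Fin N) (Fin N) ℝ) : Prop :=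
  ∃ c > (0 : ℝ), ∀ p ∈ 𝒪, ∀ ξ : Fin (m + 1) → ℝ,
    ∀ μ ∈ spectrum ℂ
      ((∑ j, (Complex.I * (ξ j : ℂ)) • cmap (A j p)) +
        ∑ j, ∑ k, ((ξ j * ξ k : ℝ) : ℂ) • cmap (B j k p)),
      c * ∑ j, (ξ j) ^ 2 ≤ μ.re

/-- (H3): noncharacteristic boundary. -/
def HypH3 {M N m : ℕ} (𝒪 : Set (Fin M → ℝ))
    (A : Fin (m + 1) → (Fin M → ℝ) → Matrix (Fin N) (Fin N) ℝ) : Prop :=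
  ∀ p ∈ 𝒪, (A (Fin.last m) p).det ≠ 0

end

section Helpers

open Filter Topology Pointwise

theorem aux_enum {n : Type*} [Fintype n] [DecidableEq n] (G : Matrix n n ℂ) :
    ∃ x : n → ℂ, Finset.univ.val.map x = G.charpoly.roots ∧
      ∀ z, (G.charpoly).eval z = ∏ i, (z - x i) := by
  have hc : G.charpoly.roots.card = Fintype.card n := by
    rw [IsAlgClosed.card_roots_eq_natDegree, Matrix.charpoly_natDegree_eq_dim]
  obtain ⟨l, hl⟩ : ∃ l : List ℂ, (l : Multiset ℂ) = G.charpoly.roots :=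
    ⟨_, Multiset.coe_toList _⟩
  have hlen : l.length = Fintype.card n := by rw [← hc, ← hl]; simp
  let e : n ≃ Fin l.length := (Fintype.equivFin n).trans (finCongr hlen.symm)
  have hx : Finset.univ.val.map (fun i => l.get (e i)) = G.charpoly.roots := by
    rw [← hl]
    have h1 : (Finset.univ : Finset n).val.map e = (Finset.univ : Finset (Fin l.length)).val := by
      rw [← Finset.map_univ_equiv e]; simp
    have h2 := congrArg (Multiset.map l.get) h1
    rw [Multiset.map_map] at h2
    have h3 : (Finset.univ : Finset (Fin l.length)).val.map l.get = (l : Multiset ℂ) := by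
      rw [Fin.univ_val_map, List.ofFn_get]
    rw [h3] at h2
    exact h2
  refine ⟨_, hx, fun z => ?_⟩
  rw [(IsAlgClosed.splits G.charpoly).eq_prod_roots_of_monic (Matrix.charpoly_monic G), ← hx]
  rw [Polynomial.eval_multiset_prod, Multiset.map_map, Multiset.map_map]
  simp [Function.comp_def]

theorem aux_lower {n : Type*} [Fintype n] [DecidableEq n] (G : Matrix n n ℂ) (b : ℝ)
    (h : ∀ μ ∈ spectrum ℂ G, b ≤ μ.re) (z : ℂ) (hz : z.re ≤ b) :
    (b - z.re) ^ (Fintype.card n) ≤ ‖(G.charpoly).eval z‖ := by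
  obtain ⟨x, hx, he⟩ := aux_enum G
  rw [he, norm_prod, ← Finset.card_univ, ← Finset.prod_const]
  refine Finset.prod_le_prod (fun i _ => by linarith) (fun i _ => ?_)
  have hi : x i ∈ spectrum ℂ G := by
    rw [Matrix.mem_spectrum_iff_isRoot_charpoly]
    apply Polynomial.isRoot_of_mem_roots
    rw [← hx]
    exact Multiset.mem_map_of_mem _ (Finset.mem_univ _)
  have := h _ hi
  calc b - z.re ≤ (x i).re - z.re := by linarith
    _ = (x i - z).re := by simp
    _ ≤ ‖x i - z‖ := Complex.re_le_norm _
    _ = _ := norm_sub_rev _ _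

theorem aux_cont_eval {n T : Type*} [Fintype n] [DecidableEq n] [TopologicalSpace T]
    (G : T → Matrix n n ℂ) (hG : Continuous G) (z : ℂ) :
    Continuous fun s => ((G s).charpoly).eval z := by
  simp only [Matrix.eval_charpoly]
  fun_prop

section
attribute [local instance] Matrix.linftyOpNormedRing Matrix.linftyOpNormedAlgebra
theorem aux_bound {n : Type*} [Fintype n] [DecidableEq n]
    (G : ℝ → Matrix n n ℂ) (hG : Continuous G) :
    ∃ R : ℝ, ∀ s ∈ Set.Icc (0:ℝ) 1, ∀ μ ∈ spectrum ℂ (G s), ‖μ‖ ≤ R := by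
  have : Continuous fun s => ‖G s‖ * ‖(1 : Matrix n n ℂ)‖ := by fun_prop
  obtain ⟨R, hR⟩ := (isCompact_Icc (a := (0:ℝ)) (b := 1)).bddAbove_image this.continuousOn
  refine ⟨R, fun s hs μ hμ => ?_⟩
  exact (spectrum.norm_le_norm_mul_of_mem hμ).trans (hR ⟨s, hs, rfl⟩)
end

theorem aux_const {n : Type*} [Fintype n] [DecidableEq n]
    (G : ℝ → Matrix n n ℂ) (hG : Continuous G)
    (h : ∀ s ∈ Set.Icc (0:ℝ) 1, ∀ μ ∈ spectrum ℂ (G s), μ.re ≠ 0) :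
    ((G 1).charpoly.roots.filter (fun μ => 0 < μ.re)).card =
      ((G 0).charpoly.roots.filter (fun μ => 0 < μ.re)).card := by
  obtain ⟨R, hR⟩ := aux_bound G hG
  let T := Set.Icc (0:ℝ) 1
  let G' : T → Matrix n n ℂ := fun s => G s
  have hG' : Continuous G' := hG.comp continuous_subtype_val
  let k : T → ℕ := fun s => ((G s).charpoly.roots.filter (fun μ => 0 < μ.re)).card
  choose x hx he using fun s : T => aux_enum (G' s)
  have hk : ∀ (s : T) (y : n → ℂ), Finset.univ.val.map y = (G' s).charpoly.roots →
      k s = ((Finset.univ : Finset n).filter (fun i => 0 < (y i).re)).card := by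
    intro s y hy
    change ((G' s).charpoly.roots.filter (fun μ => 0 < μ.re)).card = _
    rw [← hy, Multiset.filter_map, Multiset.card_map]
    rfl
  have hmem : ∀ (s : T) (y : n → ℂ), Finset.univ.val.map y = (G' s).charpoly.roots →
      ∀ i, y i ∈ spectrum ℂ (G s) := by
    intro s y hy i
    rw [Matrix.mem_spectrum_iff_isRoot_charpoly]
    apply Polynomial.isRoot_of_mem_roots
    change _ ∈ (G' s).charpoly.roots
    rw [← hy]
    exact Multiset.mem_map_of_mem _ (Finset.mem_univ _)
  have hcont : Continuous k := by
    rw [continuous_iff_continuousAt]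
    intro s
    rw [ContinuousAt, tendsto_iff_ultrafilter]
    intro U hU
    have hK : IsCompact (Set.univ.pi fun _ : n => Metric.closedBall (0:ℂ) R) :=
      isCompact_univ_pi fun _ => isCompact_closedBall _ _
    obtain ⟨y, -, hy⟩ := hK.ultrafilter_le_nhds (U.map x) (by
      rw [le_principal_iff]
      refine Filter.Eventually.of_forall (f := (U : Filter T)) fun t => ?_
      intro i _
      simpa using hR t t.2 _ (hmem t _ (hx t) i))
    have hxy : Tendsto x U (𝓝 y) := hy
    have hxi : ∀ i, Tendsto (fun t => x t i) U (𝓝 (y i)) := fun i => (tendsto_pi_nhds.1 hxy) i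
    have hev : ∀ z, ((G' s).charpoly).eval z = ∏ i, (z - y i) := by
      intro z
      have t1 : Tendsto (fun t => ((G' t).charpoly).eval z) U (𝓝 (((G' s).charpoly).eval z)) :=
        ((aux_cont_eval G' hG' z).tendsto s).mono_left hU
      have t2 : Tendsto (fun t => ((G' t).charpoly).eval z) U (𝓝 (∏ i, (z - y i))) := by
        simp only [he]
        exact tendsto_finsetProd _ fun i _ => tendsto_const_nhds.sub (hxi i)
      exact tendsto_nhds_unique t1 t2
    have hpoly : (G' s).charpoly = ∏ i, (Polynomial.X - Polynomial.C (y i)) := by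
      apply Polynomial.funext
      intro z
      rw [hev, Polynomial.eval_prod]
      simp
    have hyr : Finset.univ.val.map y = (G' s).charpoly.roots := by
      rw [hpoly, Polynomial.roots_prod _ _ (Finset.prod_ne_zero_iff.2
        fun i _ => Polynomial.X_sub_C_ne_zero _)]
      simp [Multiset.bind_singleton]
    have hy0 : ∀ i, (y i).re ≠ 0 := fun i => h s s.2 _ (hmem s y hyr i)
    have hsign : ∀ i, ∀ᶠ t in (U : Filter T), (0 < (x t i).re ↔ 0 < (y i).re) := by
      intro i
      have hre : Tendsto (fun t => (x t i).re) U (𝓝 (y i).re) :=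
        (Complex.continuous_re.tendsto _).comp (hxi i)
      rcases lt_or_gt_of_ne (hy0 i) with hi | hi
      · filter_upwards [hre.eventually (gt_mem_nhds hi)] with t ht
        constructor <;> intro <;> linarith
      · filter_upwards [hre.eventually (lt_mem_nhds hi)] with t ht
        exact ⟨fun _ => hi, fun _ => ht⟩
    have hall := Filter.eventually_all.2 hsign
    refine tendsto_nhds_of_eventually_eq ?_
    filter_upwards [hall] with t ht
    rw [hk t _ (hx t), hk s _ hyr]
    simp only [ht]
  have hcs : PreconnectedSpace T := Subtype.preconnectedSpace isPreconnected_Icc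
  exact PreconnectedSpace.constant hcs hcont (x := ⟨1, zero_le_one, le_rfl⟩) (y := ⟨0, le_rfl, zero_le_one⟩)

theorem aux_sym {n : Type*} [Fintype n] [DecidableEq n] (K : Matrix n n ℂ) :
    (Matrix.fromBlocks 0 1 K 0 : Matrix (n ⊕ n) (n ⊕ n) ℂ).charpoly.roots.map (fun z => -z) =
    (Matrix.fromBlocks 0 1 K 0 : Matrix (n ⊕ n) (n ⊕ n) ℂ).charpoly.roots := by
  rw [← Polynomial.roots_comp_neg_X]
  congr 1
  apply Polynomial.funext
  intro z
  rw [Polynomial.eval_comp, Matrix.eval_charpoly, Matrix.eval_charpoly]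
  set G : Matrix (n ⊕ n) (n ⊕ n) ℂ := Matrix.fromBlocks 0 1 K 0 with hG
  set D : Matrix (n ⊕ n) (n ⊕ n) ℂ := Matrix.fromBlocks 1 0 0 (-1) with hD
  have hDD : D * D = 1 := by simp [hD, Matrix.fromBlocks_multiply]
  have hDG : D * G * D = -G := by
    simp [hD, hG, Matrix.fromBlocks_multiply, Matrix.fromBlocks_neg]
  have h1 : Matrix.scalar (n ⊕ n) (Polynomial.eval z (-Polynomial.X)) - G =
      - (D * (Matrix.scalar (n ⊕ n) z - G) * D) := by
    have : D * (Matrix.scalar (n ⊕ n) z) * D = Matrix.scalar (n ⊕ n) z := by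
      rw [← (Matrix.scalar_commute z (fun r => mul_comm _ _) D).eq, mul_assoc, hDD, mul_one]
    rw [mul_sub, sub_mul, this, hDG]
    simp
    abel
  have hd : D.det * D.det = 1 := by rw [← Matrix.det_mul, hDD, Matrix.det_one]
  rw [h1, Matrix.det_neg, Matrix.det_mul, Matrix.det_mul]
  have : (-1:ℂ) ^ Fintype.card (n ⊕ n) = 1 := by
    rw [Fintype.card_sum]; exact Even.neg_one_pow ⟨_, rfl⟩
  rw [this]
  linear_combination (Matrix.scalar (n ⊕ n) z - G).det * hd

/-- symbol -/
def symb {N m : ℕ} (A : Fin (m + 1) → Matrix (Fin N) (Fin N) ℝ)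
    (B : Fin (m + 1) → Fin (m + 1) → Matrix (Fin N) (Fin N) ℝ) (ξ : Fin (m + 1) → ℝ) :
    Matrix (Fin N) (Fin N) ℂ :=
  (∑ j, (Complex.I * (ξ j : ℂ)) • cmap (A j)) +
        ∑ j, ∑ k, ((ξ j * ξ k : ℝ) : ℂ) • cmap (B j k)

theorem cmap_smul {N : ℕ} (s : ℝ) (A : Matrix (Fin N) (Fin N) ℝ) :
    cmap (s • A) = (s : ℂ) • cmap A := by
  ext i j; simp [cmap]

theorem aux_scale {N m : ℕ} (A : Fin (m + 1) → Matrix (Fin N) (Fin N) ℝ)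
    (B : Fin (m + 1) → Fin (m + 1) → Matrix (Fin N) (Fin N) ℝ) (c : ℝ)
    (h : ∀ ξ, ∀ μ ∈ spectrum ℂ (symb A B ξ), c * ∑ j, (ξ j) ^ 2 ≤ μ.re) (s : ℝ) :
    ∀ ξ, ∀ μ ∈ spectrum ℂ (symb (fun j => s • A j) B ξ), c * ∑ j, (ξ j) ^ 2 ≤ μ.re := by
  intro ξ
  set b := c * ∑ j, (ξ j) ^ 2 with hb
  have hne : ∀ s : ℝ, s ≠ 0 → ∀ μ ∈ spectrum ℂ (symb (fun j => s • A j) B ξ), b ≤ μ.re := by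
    intro s hs μ hμ
    have hsC : (s : ℂ) ≠ 0 := by exact_mod_cast hs
    have e : symb A B (fun j => ξ j / s) = ((s : ℂ)^2)⁻¹ • symb (fun j => s • A j) B ξ := by
      simp only [symb, smul_add, Finset.smul_sum, cmap_smul, smul_smul]
      congr 1
      · refine Finset.sum_congr rfl fun j _ => ?_
        congr 1; push_cast; field_simp
      · refine Finset.sum_congr rfl fun j _ => Finset.sum_congr rfl fun k _ => ?_
        congr 1; push_cast; field_simp
    have hu : ((s : ℂ)^2)⁻¹ ≠ 0 := by positivity
    have hm : ((s : ℂ)^2)⁻¹ • μ ∈ spectrum ℂ (symb A B (fun j => ξ j / s)) := by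
      rw [e]
      have := spectrum.unit_smul_eq_smul (symb (fun j => s • A j) B ξ) (Units.mk0 _ hu)
      have h2 : Units.mk0 _ hu • μ ∈ Units.mk0 _ hu • spectrum ℂ (symb (fun j => s • A j) B ξ) :=
        Set.smul_mem_smul_set hμ
      rw [← this] at h2
      exact h2
    have := h _ _ hm
    have e2 : (((s : ℂ)^2)⁻¹ • μ).re = (s^2)⁻¹ * μ.re := by
      rw [smul_eq_mul, ← Complex.re_ofReal_mul]; push_cast; rfl
    rw [e2] at this
    have e3 : c * ∑ j, (ξ j / s)^2 = (s^2)⁻¹ * b := by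
      simp only [hb, div_pow, ← Finset.sum_div]; field_simp
    rw [e3] at this
    exact le_of_mul_le_mul_left this (by positivity)
  intro μ hμ
  by_contra hlt
  push Not at hlt
  have hcont : Continuous fun s : ℝ => symb (fun j => s • A j) B ξ := by
    simp only [symb, cmap_smul]; fun_prop
  have hcl : IsClosed {s : ℝ | (b - μ.re) ^ (Fintype.card (Fin N)) ≤
      ‖((symb (fun j => s • A j) B ξ).charpoly).eval μ‖} :=
    isClosed_le continuous_const (aux_cont_eval _ hcont μ).norm
  have hd : Dense ({0}ᶜ : Set ℝ) := dense_compl_singleton 0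
  have hsub : ({0}ᶜ : Set ℝ) ⊆ {s : ℝ | (b - μ.re) ^ (Fintype.card (Fin N)) ≤
      ‖((symb (fun j => s • A j) B ξ).charpoly).eval μ‖} := fun s hs =>
    aux_lower _ b (hne s hs) μ hlt.le
  have := hcl.closure_subset_iff.2 hsub (hd s)
  rw [Matrix.mem_spectrum_iff_isRoot_charpoly] at hμ
  simp only [Set.mem_ofPred_eq, hμ.eq_zero, norm_zero] at this
  have h5 : 0 < (b - μ.re) ^ (Fintype.card (Fin N)) := pow_pos (by linarith) _
  linarith

theorem aux_B {N m : ℕ} (A : Fin (m + 1) → Matrix (Fin N) (Fin N) ℝ)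
    (B : Fin (m + 1) → Fin (m + 1) → Matrix (Fin N) (Fin N) ℝ) (c : ℝ) (hc : 0 < c)
    (h : ∀ ξ, ∀ μ ∈ spectrum ℂ (symb A B ξ), c * ∑ j, (ξ j) ^ 2 ≤ μ.re) :
    IsUnit (cmap (B (Fin.last m) (Fin.last m))) := by
  have h0 := aux_scale A B c h 0 (Pi.single (Fin.last m) 1)
  have e : symb (fun j => (0:ℝ) • A j) B (Pi.single (Fin.last m) 1) =
      cmap (B (Fin.last m) (Fin.last m)) := by
    simp only [symb, cmap_smul]
    simp [Pi.single_apply, ite_and]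
  rw [e] at h0
  by_contra hn
  rw [← spectrum.zero_mem_iff ℂ] at hn
  have := h0 _ hn
  simp [Pi.single_apply] at this
  linarith

theorem aux_noimag {N m : ℕ} (A : Fin (m + 1) → Matrix (Fin N) (Fin N) ℝ)
    (B : Fin (m + 1) → Fin (m + 1) → Matrix (Fin N) (Fin N) ℝ) (c : ℝ) (hc : 0 < c)
    (h : ∀ ξ, ∀ μ ∈ spectrum ℂ (symb A B ξ), c * ∑ j, (ξ j) ^ 2 ≤ μ.re)
    (ζ : Freq m) (hζ : ζ ≠ 0) (hγ : 0 ≤ ζ.2.2) :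
    ∀ μ ∈ spectrum ℂ (calG A B ζ), μ.re ≠ 0 := by
  intro μ hμ hre
  obtain ⟨τ, η, γ⟩ := ζ
  simp only at hγ
  have hB := aux_B A B c hc h
  have hBi : cmap (B (Fin.last m) (Fin.last m)) * (cmap (B (Fin.last m) (Fin.last m)))⁻¹ = 1 :=
    Matrix.mul_nonsing_inv _ ((Matrix.isUnit_iff_isUnit_det _).1 hB)
  have hμI : μ = Complex.I * (μ.im : ℂ) := by
    apply Complex.ext <;> simp [hre]
  set y := μ.im with hy
  rw [Matrix.mem_spectrum_iff_isRoot_charpoly, Polynomial.IsRoot, Matrix.eval_charpoly,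
    ← Matrix.exists_mulVec_eq_zero_iff] at hμ
  obtain ⟨v, hv0, hv⟩ := hμ
  have hs : Matrix.scalar (Fin N ⊕ Fin N) μ - calG A B (τ, η, γ) =
      Matrix.fromBlocks (μ • 1) (-1) (-calM A B (τ, η, γ)) (μ • 1 - calA A B (τ, η, γ)) := by
    rw [calG, Matrix.scalar_apply, ← Matrix.smul_one_eq_diagonal, ← Matrix.fromBlocks_one,
      Matrix.fromBlocks_smul, sub_eq_add_neg, Matrix.fromBlocks_neg, Matrix.fromBlocks_add]
    simp [sub_eq_add_neg]
  rw [hs, Matrix.fromBlocks_mulVec] at hv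
  set u := v ∘ Sum.inl
  set w := v ∘ Sum.inr
  have hv1 : w = μ • u := by
    have := congrArg (fun f => f ∘ Sum.inl) hv
    simp [Matrix.smul_mulVec, Matrix.neg_mulVec] at this
    have h9 : μ • u + -w = 0 := this
    rw [← sub_eq_add_neg, sub_eq_zero] at h9
    exact h9.symm
  have hv2 : (-calM A B (τ, η, γ)) *ᵥ u + (μ • 1 - calA A B (τ, η, γ)) *ᵥ w = 0 := by
    have := congrArg (fun f => f ∘ Sum.inr) hv
    simpa using this
  have hu0 : u ≠ 0 := by
    intro hu
    apply hv0
    rw [hu, smul_zero] at hv1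
    funext i
    rcases i with i | i
    · exact congrFun hu i
    · exact congrFun hv1 i
  rw [hv1, Matrix.mulVec_smul, ← Matrix.smul_mulVec, ← Matrix.add_mulVec] at hv2
  have hv3 := congrArg (fun f => cmap (B (Fin.last m) (Fin.last m)) *ᵥ f) hv2
  simp only [Matrix.mulVec_mulVec, Matrix.mulVec_zero] at hv3
  have key : cmap (B (Fin.last m) (Fin.last m)) *
      (-calM A B (τ, η, γ) + μ • (μ • 1 - calA A B (τ, η, γ))) =
      Matrix.scalar (Fin N) (-(Complex.I * τ + γ)) - symb A B (Fin.snoc η y) := by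
    have hI : μ * μ = -((y:ℂ) * y) := by
      rw [hμI]; linear_combination (y:ℂ)^2 * Complex.I_mul_I
    rw [mul_add, mul_neg, mul_smul_comm, mul_sub, calM, calA, ← mul_assoc, ← mul_assoc, hBi,
      one_mul, one_mul, mul_smul_comm, mul_one, smul_sub, smul_smul, hI, hμI]
    simp only [symb, Fin.sum_univ_castSucc, Fin.snoc_castSucc, Fin.snoc_last,
      Finset.sum_add_distrib, Matrix.scalar_apply, ← Matrix.smul_one_eq_diagonal, smul_sub,
      Finset.smul_sum, smul_add, smul_smul]
    have e1 : ∀ j, Complex.I * (y:ℂ) * (Complex.I * (η j : ℂ)) = -((y * η j : ℝ) : ℂ) := by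
      intro j; push_cast; linear_combination ((y:ℂ) * η j) * Complex.I_mul_I
    have e2 : ∀ j, ((η j * y : ℝ) : ℂ) = ((y * η j : ℝ) : ℂ) := by
      intro j; rw [mul_comm]
    simp only [e1, e2, neg_smul, Finset.sum_neg_distrib, Complex.ofReal_mul]
    abel
  rw [key] at hv3
  have hdet : -(Complex.I * τ + γ) ∈ spectrum ℂ (symb A B (Fin.snoc η y)) := by
    rw [Matrix.mem_spectrum_iff_isRoot_charpoly, Polynomial.IsRoot, Matrix.eval_charpoly,
      ← Matrix.exists_mulVec_eq_zero_iff]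
    exact ⟨u, hu0, hv3⟩
  have hle := h _ _ hdet
  simp only [Fin.sum_univ_castSucc, Fin.snoc_castSucc, Fin.snoc_last] at hle
  have hre2 : (-(Complex.I * (τ:ℂ) + γ)).re = -γ := by simp
  rw [hre2] at hle
  have hsn : 0 ≤ ∑ j, (η j)^2 := Finset.sum_nonneg fun _ _ => sq_nonneg _
  have hS : ∑ j, (η j)^2 + y^2 = 0 := by
    nlinarith [sq_nonneg y]
  have hγ0 : γ = 0 := by rw [hS] at hle; linarith
  have hη2 : ∑ j, (η j)^2 = 0 := by nlinarith [sq_nonneg y]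
  have hy2 : y = 0 := by
    have : y^2 = 0 := by linarith
    exact pow_eq_zero_iff (two_ne_zero) |>.1 this
  have hη0 : η = 0 := by
    funext j
    have := (Finset.sum_eq_zero_iff_of_nonneg (fun i _ => sq_nonneg (η i))).1 hη2 j
      (Finset.mem_univ _)
    exact pow_eq_zero_iff (two_ne_zero) |>.1 this
  have hsym0 : symb A B (Fin.snoc η y) = 0 := by
    simp [symb, Fin.sum_univ_castSucc, hη0, hy2]
  rw [hsym0, sub_zero, hγ0] at hv3
  have hτ : τ = 0 := by
    by_contra hτ
    obtain ⟨i, hi⟩ := Function.ne_iff.1 hu0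
    have := congrFun hv3 i
    simp [Matrix.mulVec_diagonal, hτ] at this
    exact hi this
  exact hζ (by rw [hτ, hη0, hγ0]; rfl)

end Helpers


noncomputable section

/-- Under (H0)–(H3), for `ζ ≠ 0` with `γ ≥ 0`, the matrix `𝒢(p, ζ)` has no
purely imaginary eigenvalue and has exactly `N` eigenvalues of positive real part and `N` of
negative real part, counted with algebraic multiplicity. -/
theorem calG_hyperbolic_splitting {M N m : ℕ} (𝒪 : Set (Fin M → ℝ)) (hO : IsOpen 𝒪)
    (A : Fin (m + 1) → (Fin M → ℝ) → Matrix (Fin N) (Fin N) ℝ)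
    (B : Fin (m + 1) → Fin (m + 1) → (Fin M → ℝ) → Matrix (Fin N) (Fin N) ℝ)
    (h0 : HypH0 𝒪 A B) (h1 : HypH1 𝒪 A) (h2 : HypH2 𝒪 A B) (h3 : HypH3 𝒪 A)
    (p : Fin M → ℝ) (hp : p ∈ 𝒪) (ζ : Freq m) (hζ : ζ ≠ 0) (hγ : 0 ≤ ζ.2.2) :
    (∀ μ ∈ spectrum ℂ (calG (fun j => A j p) (fun j k => B j k p) ζ), μ.re ≠ 0) ∧
    ((calG (fun j => A j p) (fun j k => B j k p) ζ).charpoly.roots.filter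
        (fun μ => 0 < μ.re)).card = N ∧
    ((calG (fun j => A j p) (fun j k => B j k p) ζ).charpoly.roots.filter
        (fun μ => μ.re < 0)).card = N := by
  obtain ⟨c, hc, h2⟩ := h2
  have hP : ∀ ξ, ∀ μ ∈ spectrum ℂ (symb (fun j => A j p) (fun j k => B j k p) ξ),
      c * ∑ j, (ξ j) ^ 2 ≤ μ.re := h2 p hp
  have hno := aux_noimag _ _ c hc hP ζ hζ hγ
  let Z : ℝ → Freq m := fun s => (s * ζ.1, s • ζ.2.1, s * ζ.2.2 + (1 - s))
  let G : ℝ → Matrix (Fin N ⊕ Fin N) (Fin N ⊕ Fin N) ℂ := fun s =>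
    calG (fun j => s • A j p) (fun j k => B j k p) (Z s)
  have hG : Continuous G := by
    have hM : Continuous fun s => calM (fun j => s • A j p) (fun j k => B j k p) (Z s) := by
      simp only [calM, cmap_smul, Z, Pi.smul_apply, smul_eq_mul]
      fun_prop
    have hA : Continuous fun s => calA (fun j => s • A j p) (fun j k => B j k p) (Z s) := by
      simp only [calA, cmap_smul, Z, Pi.smul_apply, smul_eq_mul]
      fun_prop
    exact Continuous.matrix_fromBlocks continuous_const continuous_const hM hA
  have hZ1 : Z 1 = ζ := by simp [Z]
  have hG1 : G 1 = calG (fun j => A j p) (fun j k => B j k p) ζ := by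
    simp only [G, hZ1, one_smul]
  have hpath : ∀ s ∈ Set.Icc (0:ℝ) 1, ∀ μ ∈ spectrum ℂ (G s), μ.re ≠ 0 := by
    intro s hs
    refine aux_noimag _ _ c hc (aux_scale _ _ c hP s) (Z s) ?_ ?_
    · rcases eq_or_lt_of_le hs.2 with h | h
      · rw [h, hZ1]; exact hζ
      · intro h0
        have : s * ζ.2.2 + (1 - s) = 0 := congrArg (fun z : Freq m => z.2.2) h0
        have := mul_nonneg hs.1 hγ
        linarith
    · have := mul_nonneg hs.1 hγ
      have := hs.2
      simp only [Z]; linarith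
  have hconst := aux_const G hG hpath
  have hG0 : G 0 = Matrix.fromBlocks 0 1 (calM (fun j => (0:ℝ) • A j p)
      (fun j k => B j k p) (Z 0)) 0 := by
    simp only [G, calG]
    congr 1
    simp [calA, cmap_smul, Z, cmap]
  have hsym := aux_sym (calM (fun j => (0:ℝ) • A j p) (fun j k => B j k p) (Z 0))
  rw [← hG0] at hsym
  have htot : ∀ H : Matrix (Fin N ⊕ Fin N) (Fin N ⊕ Fin N) ℂ,
      (∀ μ ∈ spectrum ℂ H, μ.re ≠ 0) →
      (H.charpoly.roots.filter (fun μ => 0 < μ.re)).card +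
      (H.charpoly.roots.filter (fun μ => μ.re < 0)).card = 2 * N := by
    intro H hH
    have hcard : H.charpoly.roots.card = 2 * N := by
      rw [IsAlgClosed.card_roots_eq_natDegree, Matrix.charpoly_natDegree_eq_dim]
      simp; ring
    have e : H.charpoly.roots.filter (fun μ => μ.re < 0) =
        H.charpoly.roots.filter (fun μ => ¬ 0 < μ.re) := by
      refine Multiset.filter_congr fun μ hμ => ?_
      have := hH μ (Matrix.mem_spectrum_iff_isRoot_charpoly.2 (Polynomial.isRoot_of_mem_roots hμ))
      constructor
      · intro h; linarith
      · intro h; exact lt_of_le_of_ne (not_lt.1 h) this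
    rw [e, ← Multiset.card_add, Multiset.filter_add_not, hcard]
  have hs0 : ((G 0).charpoly.roots.filter (fun μ => 0 < μ.re)).card =
      ((G 0).charpoly.roots.filter (fun μ => μ.re < 0)).card := by
    conv_lhs => rw [← hsym, Multiset.filter_map, Multiset.card_map]
    simp [Function.comp_def]
  have ht0 := htot (G 0) (hpath 0 (by simp))
  have ht1 := htot _ hno
  rw [hG1] at hconst
  exact ⟨hno, by omega, by omega⟩

end
end

section
/- Let G ∈ M_n(ℂ) have no purely imaginary eigenvalue and let E₋(G) be the invariant subspace spanned by the generalized eigenvectors of G for eigenvalues with Re μ < 0. Let ℂⁿ = F₋ ⊕ F₊ with associated projections Π₋, Π₊, let κ > 1, and let S ∈ M_n(ℂ) be Hermitian such that ⟨SU, U⟩ ≥ κ² |Π₊U|² − |Π₋U|² for all U ∈ ℂⁿ and Re ⟨S G V, V⟩ ≥ 0 for all V ∈ ℂⁿ. Then every U ∈ E₋(G) satisfies |Π₊U| ≤ (1/(κ − 1)) |U|. -/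
open Matrix

noncomputable section

lemma aux_poly_deriv {E : Type*} [NormedAddCommGroup E] [NormedSpace ℂ E]
    (N : Module.End ℂ E) (U : E) (m : ℕ) (x : ℝ) :
    HasDerivAt (fun x : ℝ => ∑ k ∈ Finset.range (m + 1),
      ((x : ℂ) ^ k / (k.factorial : ℂ)) • (N ^ k) U)
      (∑ k ∈ Finset.range m, ((x : ℂ) ^ k / (k.factorial : ℂ)) • (N ^ (k + 1)) U) x := by
  induction m with
  | zero => simpa using hasDerivAt_const x U
  | succ m ih =>
    have h1 : HasDerivAt (fun x : ℝ => (x : ℂ) ^ (m + 1) / ((m + 1).factorial : ℂ))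
        ((x : ℂ) ^ m / (m.factorial : ℂ)) x := by
      have h2 := ((Complex.ofRealCLM.hasDerivAt (x := x)).pow (m + 1)).div_const
        ((m + 1).factorial : ℂ)
      have hm : (m.factorial : ℂ) ≠ 0 := by exact_mod_cast m.factorial_ne_zero
      have hm1 : (m : ℂ) + 1 ≠ 0 := by exact_mod_cast m.succ_ne_zero
      refine HasDerivAt.congr_deriv (f := fun x : ℝ => (x : ℂ) ^ (m + 1) / ((m + 1).factorial : ℂ))
        h2 ?_
      simp [Nat.factorial_succ]
      field_simp
    have h3 := ih.add (h1.smul_const ((N ^ (m + 1)) U))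
    rw [Finset.sum_range_succ]
    convert h3 using 1
    funext y
    simp [Finset.sum_range_succ _ (m + 1)]

lemma aux_decay (μ : ℂ) (hμ : μ.re < 0) (k : ℕ) :
    Filter.Tendsto (fun x : ℝ => Complex.exp (μ * x) * ((x : ℂ) ^ k / (k.factorial : ℂ)))
      Filter.atTop (nhds 0) := by
  rw [tendsto_zero_iff_norm_tendsto_zero]
  have h := (tendsto_rpow_mul_exp_neg_mul_atTop_nhds_zero (k : ℝ) (-μ.re)
    (by linarith)).mul_const (1 / (k.factorial : ℝ))
  rw [zero_mul] at h
  refine h.congr' ?_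
  filter_upwards [Filter.eventually_ge_atTop 0] with x hx
  simp [Complex.norm_exp, abs_of_nonneg hx]
  ring

lemma aux_curve {E : Type*} [NormedAddCommGroup E] [NormedSpace ℂ E] [FiniteDimensional ℂ E]
    (f : Module.End ℂ E) (U : E) (hU : U ∈ stableSubspace f) :
    ∃ u : ℝ → E, u 0 = U ∧ (∀ x, HasDerivAt u (f (u x)) x) ∧
      Filter.Tendsto u Filter.atTop (nhds 0) := by
  unfold stableSubspace at hU
  refine Submodule.iSup_induction _ (motive := fun U => ∃ u : ℝ → E, u 0 = U ∧
    (∀ x, HasDerivAt u (f (u x)) x) ∧ Filter.Tendsto u Filter.atTop (nhds 0)) hU ?_ ?_ ?_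
  · intro μ U hU
    by_cases hμ : μ.re < 0
    · simp only [Set.mem_ofPred_eq, hμ, iSup_pos] at hU
      obtain ⟨m, hm⟩ := (Module.End.mem_maxGenEigenspace f μ U).1 hU
      set N := f - μ • (1 : Module.End ℂ E) with hN
      refine ⟨fun x => Complex.exp (μ * x) • ∑ k ∈ Finset.range (m + 1),
        ((x : ℂ) ^ k / (k.factorial : ℂ)) • (N ^ k) U, ?_, ?_, ?_⟩
      · simp [Finset.sum_range_succ']
      · intro x
        have h1 : HasDerivAt (fun x : ℝ => Complex.exp (μ * x)) (Complex.exp (μ * x) * μ) x := by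
          have := ((Complex.ofRealCLM.hasDerivAt (x := x)).const_mul μ).cexp
          simpa using this
        have h2 := h1.smul (aux_poly_deriv N U m x)
        have h3 : N (∑ k ∈ Finset.range (m + 1),
            ((x : ℂ) ^ k / (k.factorial : ℂ)) • (N ^ k) U) =
            ∑ k ∈ Finset.range m, ((x : ℂ) ^ k / (k.factorial : ℂ)) • (N ^ (k + 1)) U := by
          rw [Finset.sum_range_succ, hm, smul_zero, add_zero, map_sum]
          refine Finset.sum_congr rfl fun k _ => ?_
          rw [map_smul, pow_succ' N k, Module.End.mul_apply]
        rw [← h3] at h2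
        refine HasDerivAt.congr_deriv h2 ?_
        rw [map_smul, hN, LinearMap.sub_apply, LinearMap.smul_apply, Module.End.one_apply,
          smul_sub, smul_smul]
        module
      · simp only [Finset.smul_sum, smul_smul]
        rw [show (0 : E) = ∑ k ∈ Finset.range (m + 1), (0 : ℂ) • (N ^ k) U by simp]
        exact tendsto_finsetSum _ fun k _ => (aux_decay μ hμ k).smul_const _
    · simp only [Set.mem_ofPred_eq, hμ, iSup_false, not_false_eq_true, iSup_neg,
        Submodule.mem_bot] at hU
      subst hU
      exact ⟨fun _ => 0, rfl, fun x => by simpa using hasDerivAt_const x (0 : E),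
        tendsto_const_nhds⟩
  · exact ⟨fun _ => 0, rfl, fun x => by simpa using hasDerivAt_const x (0 : E),
        tendsto_const_nhds⟩
  · rintro _ _ ⟨u, rfl, hu, hu'⟩ ⟨v, rfl, hv, hv'⟩
    refine ⟨fun x => u x + v x, rfl, fun x => ?_, by simpa using hu'.add hv'⟩
    rw [map_add]
    exact (hu x).add (hv x)

/-- A symmetrizer estimate forces vectors of the stable subspace of `G` to
have a small component on `F₊`. -/
theorem stable_subspace_small_plus_component {n : ℕ}
    (G : Matrix (Fin n) (Fin n) ℂ)
    (hG : ∀ μ ∈ spectrum ℂ G, μ.re ≠ 0)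
    (Fm Fp : Submodule ℂ (EuclideanSpace ℂ (Fin n))) (hc : IsCompl Fm Fp)
    (κ : ℝ) (hκ : 1 < κ)
    (S : Matrix (Fin n) (Fin n) ℂ) (hS : Sᴴ = S)
    (hlower : ∀ U : EuclideanSpace ℂ (Fin n),
      κ ^ 2 * ‖Submodule.linearProjOfIsCompl Fp Fm hc.symm U‖ ^ 2 -
          ‖Submodule.linearProjOfIsCompl Fm Fp hc U‖ ^ 2 ≤
        (inner ℂ (Matrix.toEuclideanLin S U) U : ℂ).re)
    (hdiss : ∀ V : EuclideanSpace ℂ (Fin n),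
      0 ≤ (inner ℂ (Matrix.toEuclideanLin (S * G) V) V : ℂ).re) :
    ∀ U ∈ stableSubspace (Matrix.toEuclideanLin G),
      ‖Submodule.linearProjOfIsCompl Fp Fm hc.symm U‖ ≤ (1 / (κ - 1)) * ‖U‖ := by
  intro U hU
  obtain ⟨u, hu0, hu, hu'⟩ := aux_curve _ U hU
  set T := (Matrix.toEuclideanLin S).toContinuousLinearMap with hT
  have hsym : ∀ v w, (inner ℂ (Matrix.toEuclideanLin S v) w : ℂ)
      = inner ℂ v (Matrix.toEuclideanLin S w) :=
    Matrix.isSymmetric_toEuclideanLin_iff.2 hS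
  have hd : ∀ x, HasDerivAt (fun x => (inner ℂ (T (u x)) (u x) : ℂ).re)
      (2 * (inner ℂ (Matrix.toEuclideanLin (S * G) (u x)) (u x) : ℂ).re) x := by
    intro x
    have h1 : HasDerivAt (fun x => T (u x)) (T (Matrix.toEuclideanLin G (u x))) x :=
      (T.restrictScalars ℝ).hasFDerivAt.comp_hasDerivAt x (hu x)
    have h2 := h1.inner ℂ (hu x)
    have h3 := Complex.reCLM.hasFDerivAt.comp_hasDerivAt x h2
    refine HasDerivAt.congr_deriv h3 ?_
    have e : Matrix.toEuclideanLin (S * G) (u x)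
        = Matrix.toEuclideanLin S (Matrix.toEuclideanLin G (u x)) := by
      simp [Matrix.toLpLin_apply]
    have e2 : (inner ℂ (T (u x)) (Matrix.toEuclideanLin G (u x)) : ℂ).re
        = (inner ℂ (T (Matrix.toEuclideanLin G (u x))) (u x) : ℂ).re := by
      simp only [hT, LinearMap.coe_toContinuousLinearMap']
      rw [hsym]
      exact inner_re_symm (𝕜 := ℂ) _ _
    rw [e, Complex.reCLM_apply, Complex.add_re, e2]
    simp only [hT, LinearMap.coe_toContinuousLinearMap']
    ring
  have hmono : Monotone (fun x => (inner ℂ (T (u x)) (u x) : ℂ).re) :=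
    monotone_of_hasDerivAt_nonneg hd fun x => mul_nonneg zero_le_two (hdiss _)
  have hlim : Filter.Tendsto (fun x => (inner ℂ (T (u x)) (u x) : ℂ).re)
      Filter.atTop (nhds 0) := by
    have h1 : Filter.Tendsto (fun x => T (u x)) Filter.atTop (nhds (T 0)) :=
      (T.continuous.tendsto 0).comp hu'
    have h2 := (Complex.continuous_re.tendsto _).comp (h1.inner (𝕜 := ℂ) hu')
    simpa [Function.comp_def] using h2
  have h0 := hmono.ge_of_tendsto hlim 0
  have hl := hlower U
  simp only [hu0, hT, LinearMap.coe_toContinuousLinearMap'] at h0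
  have hadd : ((Submodule.linearProjOfIsCompl Fm Fp hc U : Fm) : EuclideanSpace ℂ (Fin n))
      + (Submodule.linearProjOfIsCompl Fp Fm hc.symm U : Fp) = U :=
    Submodule.projection_add_projection_eq_self hc U
  have hn : ‖Submodule.linearProjOfIsCompl Fm Fp hc U‖ ≤
      ‖U‖ + ‖Submodule.linearProjOfIsCompl Fp Fm hc.symm U‖ := by
    have := norm_sub_le U
      ((Submodule.linearProjOfIsCompl Fp Fm hc.symm U : Fp) : EuclideanSpace ℂ (Fin n))
    rw [← eq_sub_of_add_eq hadd] at this
    exact this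
  have hp := norm_nonneg (Submodule.linearProjOfIsCompl Fp Fm hc.symm U)
  have hm := norm_nonneg (Submodule.linearProjOfIsCompl Fm Fp hc U)
  have hk : κ * ‖Submodule.linearProjOfIsCompl Fp Fm hc.symm U‖ ≤
      ‖Submodule.linearProjOfIsCompl Fm Fp hc U‖ := by
    apply le_of_sq_le_sq _ hm
    rw [mul_pow]
    linarith
  rw [one_div, inv_mul_eq_div, le_div_iff₀ (by linarith)]
  linarith

end
end

section
/- Under Assumptions (H0)–(H3), for every p̲ ∈ 𝒪 there exist a neighborhood ω of (p̲, 0) in ℝ^M × ℝ^{d+1}, a constant c > 0, and C^∞ maps 𝒱 : ω → GL_{2N}(ℂ), H : ω → M_N(ℂ), P : ω → M_N(ℂ) such that for all (p, ζ) ∈ ω: 𝒱(p,ζ)^{-1} 𝒢(p,ζ) 𝒱(p,ζ) is the block diagonal matrix diag(H(p,ζ), P(p,ζ)); H(p, 0) = 0 and P(p, 0) = B_{d,d}(p)^{-1} A_d(p); every eigenvalue μ of P(p, ζ) satisfies |Re μ| ≥ c; and H(p, ζ) = −A_d(p)^{-1}((iτ + γ) Id + Σ_{j=1}^{d-1} i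 η_j A_j(p)) + O(|ζ|²) as ζ → 0, uniformly for p near p̲. -/
open Matrix Complex
open scoped ContDiff

noncomputable section

/-- The first-order part `−A_d(p)⁻¹((iτ + γ) Id + Σ_{j<d} i η_j A_j(p))` of the hyperbolic
block. -/
def hypBlockLin {M N m : ℕ} (A : Fin (m + 1) → (Fin M → ℝ) → Matrix (Fin N) (Fin N) ℝ)
    (p : Fin M → ℝ) (ζ : Freq m) : Matrix (Fin N) (Fin N) ℂ :=
  -((cmap (A (Fin.last m) p))⁻¹ *
    ((Complex.I * (ζ.1 : ℂ) + (ζ.2.2 : ℂ)) • (1 : Matrix (Fin N) (Fin N) ℂ) +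
      ∑ j : Fin m, (Complex.I * (ζ.2.1 j : ℂ)) • cmap (A j.castSucc p)))

open scoped Topology

theorem bd_root_exists {R : Type*} [NormedRing R] [NormedAlgebra ℝ R] [CompleteSpace R]
    (a x0 : R) (hx : x0 * x0 = a * x0) (T : R ≃L[ℝ] R)
    (hT : ∀ h, T h = h * x0 + x0 * h - a * h) :
    ∃ Φ : R × R → R, ContDiffAt ℝ ω Φ (a, 0) ∧ Φ (a, 0) = x0 ∧
      ∀ᶠ y in 𝓝 ((a, 0) : R × R), Φ y * Φ y = y.1 * Φ y + y.2 := by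
  let F : (R × R) × R → R := fun z => z.2 * z.2 - z.1.1 * z.2 - z.1.2
  have hF : ContDiffAt ℝ ω F ((a, 0), x0) := by
    have : ContDiff ℝ ω F := by fun_prop
    exact this.contDiffAt
  have hd : HasFDerivAt (fun h : R => F ((a, 0), h)) (T : R →L[ℝ] R) x0 := by
    have h1 : HasFDerivAt (fun h : R => h) (ContinuousLinearMap.id ℝ R) x0 := hasFDerivAt_id x0
    have h2 := ((h1.mul' h1).sub (h1.const_mul a)).sub (hasFDerivAt_const (0 : R) x0)
    refine h2.congr_fderiv ?_
    ext h
    simp [hT]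
    abel
  have hinv : (fderiv ℝ F ((a, 0), x0) ∘L .inr ℝ (R × R) R).IsInvertible := by
    have h3 : HasFDerivAt (fun h : R => (((a, 0), h) : (R × R) × R)) (.inr ℝ (R × R) R) x0 :=
      hasFDerivAt_prodMk_right _ _
    have h4 := (hF.differentiableAt (by simp)).hasFDerivAt.comp x0 h3
    have h5 := h4.unique hd
    rw [h5]
    exact ⟨T, rfl⟩
  refine ⟨hF.implicitFunction (by simp) hinv, hF.contDiffAt_implicitFunction (by simp) hinv,
    hF.implicitFunction_apply_self (by simp) hinv, ?_⟩
  filter_upwards [hF.eventually_apply_implicitFunction (by simp) hinv] with y hy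
  simp only [F, hx, sub_self] at hy
  rw [sub_sub, sub_eq_zero] at hy
  exact hy

theorem bd_abstract {R X : Type*} [NormedRing R] [NormedAlgebra ℝ R] [CompleteSpace R]
    [NormedAddCommGroup X] [NormedSpace ℝ X]
    (a a0 mm : X → R) (x0 : X) (ha : ContinuousAt a x0) (hm : ContinuousAt mm x0)
    (ha0 : ContinuousAt a0 x0) (ha00 : a0 x0 = a x0)
    (hm0 : mm x0 = 0) (hu : IsUnit (a x0)) (g : X → ℝ) (hmg : mm =O[𝓝 x0] g)
    (hag : (fun x => a x - a0 x) =O[𝓝 x0] g) :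
    ∃ H P : X → R, 
      (∀ᶠ x in 𝓝 x0, ContDiffAt ℝ ∞ a x → ContDiffAt ℝ ∞ mm x →
        ContDiffAt ℝ ∞ H x ∧ ContDiffAt ℝ ∞ P x) ∧
      (∀ᶠ x in 𝓝 x0, H x * H x = a x * H x + mm x) ∧
      (∀ᶠ x in 𝓝 x0, P x * P x = a x * P x + mm x) ∧
      (∀ᶠ x in 𝓝 x0, IsUnit (P x)) ∧
      (∀ᶠ x in 𝓝 x0, IsUnit (P x - H x)) ∧
      (∀ᶠ x in 𝓝 x0, IsUnit (a x - H x)) ∧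
      ContinuousAt P x0 ∧ P x0 = a x0 ∧
      (fun x => H x + Ring.inverse (a0 x) * mm x) =O[𝓝 x0] (fun x => g x ^ 2) := by
  obtain ⟨u, hu'⟩ := hu
  let T0 : R ≃L[ℝ] R := ContinuousLinearEquiv.equivOfInverse
    (-(ContinuousLinearMap.mul ℝ R (u : R))) (-(ContinuousLinearMap.mul ℝ R (↑u⁻¹ : R)))
    (fun x => by simp) (fun x => by simp)
  let T1 : R ≃L[ℝ] R := ContinuousLinearEquiv.equivOfInverse
    ((ContinuousLinearMap.mul ℝ R).flip (u : R)) ((ContinuousLinearMap.mul ℝ R).flip (↑u⁻¹ : R))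
    (fun x => by simp) (fun x => by simp)
  obtain ⟨Φ, hΦ1, hΦ2, hΦ3⟩ := bd_root_exists (a x0) 0 (by simp) T0 (by
    intro h; simp [T0, ← hu'])
  obtain ⟨Ψ, hΨ1, hΨ2, hΨ3⟩ := bd_root_exists (a x0) (a x0) (by simp) T1 (by
    intro h; simp [T1, ← hu'])
  have hc : Filter.Tendsto (fun x => (a x, mm x)) (𝓝 x0) (𝓝 (a x0, 0)) := by
    have := (ha.prodMk hm).tendsto
    rwa [hm0] at this
  have hΦc : Filter.Tendsto (fun x => Φ (a x, mm x)) (𝓝 x0) (𝓝 0) := by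
    have := hΦ1.continuousAt.tendsto.comp hc
    rwa [hΦ2] at this
  have hΨc : Filter.Tendsto (fun x => Ψ (a x, mm x)) (𝓝 x0) (𝓝 (a x0)) := by
    have := hΨ1.continuousAt.tendsto.comp hc
    rwa [hΨ2] at this
  have hun : {y : R | IsUnit y} ∈ 𝓝 (a x0) := by
    rw [← hu']; exact Units.isOpen.mem_nhds u.isUnit
  have e1 : ∀ᶠ x in 𝓝 x0, Φ (a x, mm x) * Φ (a x, mm x) = a x * Φ (a x, mm x) + mm x :=
    hc.eventually hΦ3
  have haH : Filter.Tendsto (fun x => a x - Φ (a x, mm x)) (𝓝 x0) (𝓝 (a x0)) := by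
    simpa using ha.tendsto.sub hΦc
  have huH : ∀ᶠ x in 𝓝 x0, IsUnit (a x - Φ (a x, mm x)) := haH.eventually hun
  have hinvc : ContinuousAt (Ring.inverse : R → R) (a x0) := by
    rw [← hu']; exact NormedRing.inverse_continuousAt u
  refine ⟨fun x => Φ (a x, mm x), fun x => Ψ (a x, mm x), ?_, e1, hc.eventually hΨ3,
    hΨc.eventually hun, ?_, huH, ?_, ?_, ?_⟩
  · have h1 := hc.eventually (hΦ1.eventually (by simp))
    have h2 := hc.eventually (hΨ1.eventually (by simp))
    filter_upwards [h1, h2] with x h1 h2 h3 h4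
    exact ⟨(h1.of_le le_top).comp x (h3.prodMk h4), (h2.of_le le_top).comp x (h3.prodMk h4)⟩
  · have : Filter.Tendsto (fun x => Ψ (a x, mm x) - Φ (a x, mm x)) (𝓝 x0) (𝓝 (a x0)) := by
      simpa using hΨc.sub hΦc
    exact this.eventually hun
  · have h0 : (fun x => Ψ (a x, mm x)) x0 = a x0 := by simp only [hm0, hΨ2]
    unfold ContinuousAt
    rw [h0]; exact hΨc
  · simp only [hm0, hΨ2]
  · have hHg : (fun x => Φ (a x, mm x)) =O[𝓝 x0] g := by
      have h1 : (fun x => Ring.inverse (a x - Φ (a x, mm x))) =O[𝓝 x0] (fun _ => (1 : ℝ)) :=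
        (hinvc.tendsto.comp haH).isBigO_one ℝ
      have h2 := (h1.mul hmg).neg_left
      simp only [one_mul] at h2
      refine h2.congr' ?_ Filter.EventuallyEq.rfl
      filter_upwards [huH, e1] with x h3 h4
      obtain ⟨v, hv⟩ := h3
      rw [← hv, Ring.inverse_unit, neg_eq_iff_eq_neg, Units.inv_mul_eq_iff_eq_mul, hv, mul_neg,
        sub_mul, h4]
      abel
    have ha0t : Filter.Tendsto a0 (𝓝 x0) (𝓝 (a x0)) := by rw [← ha00]; exact ha0
    have h1 : (fun x => Ring.inverse (a0 x)) =O[𝓝 x0] (fun _ => (1 : ℝ)) :=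
      (hinvc.tendsto.comp ha0t).isBigO_one ℝ
    have h2 := h1.mul ((hHg.mul hHg).sub (hag.mul hHg))
    refine h2.congr' ?_ (Filter.Eventually.of_forall fun x => by ring)
    filter_upwards [ha0t.eventually hun, e1] with x h3 h4
    obtain ⟨v, hv⟩ := h3
    rw [← hv, Ring.inverse_unit, Units.inv_mul_eq_iff_eq_mul, mul_add, Units.mul_inv_cancel_left,
      hv, h4, sub_mul]
    abel

theorem bd_spec {R X : Type*} [NormedRing R] [NormedAlgebra ℂ R] [CompleteSpace R]
    [TopologicalSpace X]
    (P : X → R) (x0 : X) (hP : ContinuousAt P x0)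
    (h : ∀ t : ℝ, IsUnit (algebraMap ℂ R (t * I) - P x0)) :
    ∃ c > (0 : ℝ), ∀ᶠ x in 𝓝 x0, ∀ μ ∈ spectrum ℂ (P x), c ≤ |μ.re| := by
  set K : ℝ := (‖P x0‖ + 1) * ‖(1 : R)‖ with hK
  have h1 : ∀ t ∈ Set.Icc (-K) K, ∀ᶠ z : (X × ℝ) × ℝ in 𝓝 ((x0, 0), t),
      IsUnit (algebraMap ℂ R ((z.1.2 : ℂ) + z.2 * I) - P z.1.1) := by
    intro t _
    have hc : ContinuousAt (fun z : (X × ℝ) × ℝ =>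
        algebraMap ℂ R ((z.1.2 : ℂ) + z.2 * I) - P z.1.1) ((x0, 0), t) := by
      refine ContinuousAt.sub ?_ ?_
      · exact ((continuous_algebraMap ℂ R).comp (by fun_prop)).continuousAt
      · exact ContinuousAt.comp (f := fun z : (X × ℝ) × ℝ => z.1.1) hP (by fun_prop)
    refine hc.tendsto.eventually (Units.isOpen.mem_nhds ?_)
    simpa using h t
  have h2 := isCompact_Icc.eventually_forall_of_forall_eventually
    (P := fun (z : X × ℝ) (t : ℝ) => IsUnit (algebraMap ℂ R ((z.2 : ℂ) + t * I) - P z.1)) h1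
  rw [nhds_prod_eq] at h2
  obtain ⟨p, hp, q, hq, hpq⟩ := Filter.eventually_prod_iff.1 h2
  obtain ⟨ε, hε, hq'⟩ := Metric.eventually_nhds_iff.1 hq
  refine ⟨ε, hε, ?_⟩
  have hb : ∀ᶠ x in 𝓝 x0, ‖P x‖ < ‖P x0‖ + 1 :=
    hP.norm.tendsto.eventually (gt_mem_nhds (by linarith))
  filter_upwards [hp, hb] with x hx hbx μ hμ
  by_contra hlt
  push Not at hlt
  have hμn : ‖μ‖ ≤ K := (spectrum.norm_le_norm_mul_of_mem hμ).trans
    (mul_le_mul_of_nonneg_right hbx.le (norm_nonneg _))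
  have := hpq hx (hq' (y := μ.re) (by simpa [Real.dist_eq] using hlt)) μ.im
    (abs_le.1 ((abs_im_le_norm μ).trans hμn))
  simp only [re_add_im] at this
  exact hμ this

theorem bd_prod_bound (c : ℝ) (hc : 0 ≤ c) (s : Multiset ℂ) (h : ∀ μ ∈ s, c ≤ ‖μ‖) :
    c ^ s.card ≤ ‖s.prod‖ := by
  induction s using Multiset.induction_on with
  | empty => simp
  | cons a s ih =>
    rw [Multiset.card_cons, Multiset.prod_cons, norm_mul, pow_succ']
    exact mul_le_mul (h a (by simp)) (ih fun μ hμ => h μ (by simp [hμ])) (by positivity)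
      (norm_nonneg _)

theorem bd_det_bound {N : ℕ} (c : ℝ) (hc : 0 ≤ c) (S : Matrix (Fin N) (Fin N) ℂ)
    (h : ∀ μ ∈ spectrum ℂ S, c ≤ μ.re) : c ^ N ≤ ‖S.det‖ := by
  rw [Matrix.det_eq_prod_roots_charpoly]
  have h1 : S.charpoly.roots.card = N := by
    rw [← (IsAlgClosed.splits S.charpoly).natDegree_eq_card_roots, Matrix.charpoly_natDegree_eq_dim]
    simp
  have h2 := bd_prod_bound c hc S.charpoly.roots (fun μ hμ =>
    (h μ (Matrix.mem_spectrum_iff_isRoot_charpoly.2 (Polynomial.isRoot_of_mem_roots hμ))).trans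
      (re_le_norm μ))
  rwa [h1] at h2

theorem bd_parab_last {M N m : ℕ} {𝒪 : Set (Fin M → ℝ)}
    {A : Fin (m + 1) → (Fin M → ℝ) → Matrix (Fin N) (Fin N) ℝ}
    {B : Fin (m + 1) → Fin (m + 1) → (Fin M → ℝ) → Matrix (Fin N) (Fin N) ℝ}
    (h2 : HypH2 𝒪 A B) : ∃ c > (0 : ℝ), ∀ p ∈ 𝒪, ∀ t : ℝ,
      ∀ μ ∈ spectrum ℂ ((Complex.I * (t : ℂ)) • cmap (A (Fin.last m) p) +
        ((t * t : ℝ) : ℂ) • cmap (B (Fin.last m) (Fin.last m) p)), c * t ^ 2 ≤ μ.re := by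
  obtain ⟨c, hc, h⟩ := h2
  refine ⟨c, hc, fun p hp t μ hμ => ?_⟩
  have h3 := h p hp (Pi.single (Fin.last m) t) μ
  have e1 : (∑ j, (Complex.I * ((Pi.single (Fin.last m) t : Fin (m + 1) → ℝ) j : ℂ)) •
      cmap (A j p)) = (Complex.I * (t : ℂ)) • cmap (A (Fin.last m) p) := by
    rw [Finset.sum_eq_single (Fin.last m)]
    · simp
    · intro j _ hj; simp [hj]
    · simp
  have e2 : (∑ j, ∑ k, (((Pi.single (Fin.last m) t : Fin (m + 1) → ℝ) j *
      (Pi.single (Fin.last m) t : Fin (m + 1) → ℝ) k : ℝ) : ℂ) • cmap (B j k p)) =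
      ((t * t : ℝ) : ℂ) • cmap (B (Fin.last m) (Fin.last m) p) := by
    rw [Finset.sum_eq_single (Fin.last m)]
    · rw [Finset.sum_eq_single (Fin.last m)]
      · simp
      · intro j _ hj; simp [hj]
      · simp
    · intro j _ hj; simp [hj]
    · simp
  have e3 : (∑ j, ((Pi.single (Fin.last m) t : Fin (m + 1) → ℝ) j) ^ 2) = t ^ 2 := by
    rw [Finset.sum_eq_single (Fin.last m)]
    · simp
    · intro j _ hj; simp [hj]
    · simp
  rw [e1, e2, e3] at h3
  exact h3 hμ

theorem bd_unit_limit {N : ℕ} (c : ℝ) (hc : 0 < c) (S T : Matrix (Fin N) (Fin N) ℂ)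
    (h : ∀ t : ℝ, ∀ μ ∈ spectrum ℂ ((Complex.I * (t : ℂ)) • S + ((t * t : ℝ) : ℂ) • T),
      c * t ^ 2 ≤ μ.re) : IsUnit T := by
  have h1 : ∀ s : ℝ, 0 < s → c ^ N ≤ ‖(T + (Complex.I * (s : ℂ)) • S).det‖ := by
    intro s hs
    have h3 := bd_det_bound _ (by positivity) _ (h s⁻¹)
    have e : (Complex.I * ((s⁻¹ : ℝ) : ℂ)) • S + ((s⁻¹ * s⁻¹ : ℝ) : ℂ) • T =
        ((s⁻¹ * s⁻¹ : ℝ) : ℂ) • (T + (Complex.I * (s : ℂ)) • S) := by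
      rw [smul_add, smul_smul, add_comm]
      congr 2
      have : (s : ℂ) ≠ 0 := by exact_mod_cast hs.ne'
      push_cast
      field_simp
    rw [e, Matrix.det_smul, norm_mul, norm_pow, Complex.norm_real, Fintype.card_fin,
      Real.norm_of_nonneg (by positivity), mul_pow, mul_comm, ← sq] at h3
    exact le_of_mul_le_mul_left h3 (by positivity)
  have h4 : Filter.Tendsto (fun s : ℝ => ‖(T + (Complex.I * (s : ℂ)) • S).det‖) (𝓝[>] 0)
      (𝓝 ‖T.det‖) := by
    have hcont : Continuous (fun s : ℝ => ‖(T + (Complex.I * (s : ℂ)) • S).det‖) := by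
      refine continuous_norm.comp (Continuous.matrix_det ?_)
      fun_prop
    have := (hcont.tendsto 0).mono_left (nhdsWithin_le_nhds (s := Set.Ioi 0))
    simpa using this
  have h5 : c ^ N ≤ ‖T.det‖ := ge_of_tendsto h4 (by
    filter_upwards [self_mem_nhdsWithin] with s hs using h1 s hs)
  rw [Matrix.isUnit_iff_isUnit_det, isUnit_iff_ne_zero]
  intro h0
  rw [h0, norm_zero] at h5
  have : 0 < c ^ N := by positivity
  linarith

theorem bd_imag_axis {N : ℕ} (c : ℝ) (hc : 0 < c) (S T : Matrix (Fin N) (Fin N) ℂ)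
    (hS : IsUnit S) (hT : IsUnit T)
    (h : ∀ t : ℝ, ∀ μ ∈ spectrum ℂ ((Complex.I * (t : ℂ)) • S + ((t * t : ℝ) : ℂ) • T),
      c * t ^ 2 ≤ μ.re) (t : ℝ) :
    IsUnit (algebraMap ℂ (Matrix (Fin N) (Fin N) ℂ) (t * I) - T⁻¹ * S) := by
  have hT' : IsUnit T⁻¹ := Matrix.isUnit_nonsing_inv_iff.2 hT
  by_cases ht : t = 0
  · subst ht
    simpa using (hT'.mul hS).neg
  · have h1 : IsUnit ((Complex.I * (t : ℂ)) • S + ((t * t : ℝ) : ℂ) • T) := by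
      rw [← spectrum.zero_notMem_iff ℂ]
      intro h0
      have := h t 0 h0
      simp only [zero_re] at this
      have : 0 < c * t ^ 2 := by positivity
      linarith
    have ht' : (t : ℂ) * I ≠ 0 := by simp [ht]
    have e : algebraMap ℂ (Matrix (Fin N) (Fin N) ℂ) (t * I) - T⁻¹ * S =
        T⁻¹ * (algebraMap ℂ (Matrix (Fin N) (Fin N) ℂ) (-((t : ℂ) * I)⁻¹) *
          ((Complex.I * (t : ℂ)) • S + ((t * t : ℝ) : ℂ) • T)) := by
      have htc : (t : ℂ) ≠ 0 := by exact_mod_cast ht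
      rw [← Algebra.smul_def, smul_add, smul_smul, smul_smul, mul_add, Algebra.mul_smul_comm,
        Algebra.mul_smul_comm, Matrix.nonsing_inv_mul _ ((Matrix.isUnit_iff_isUnit_det _).1 hT),
        Algebra.algebraMap_eq_smul_one]
      have e1 : -((t : ℂ) * I)⁻¹ * (I * t) = -1 := by field_simp
      have e2 : -((t : ℂ) * I)⁻¹ * ((t * t : ℝ) : ℂ) = t * I := by
        push_cast
        field_simp
        simp
      rw [e1, e2]
      module
    rw [e]
    refine hT'.mul (IsUnit.mul ?_ h1)
    exact (IsUnit.mk0 _ (neg_ne_zero.2 (inv_ne_zero ht'))).map _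

theorem bd_V_unit {N : ℕ} (H P : Matrix (Fin N) (Fin N) ℂ) (h : IsUnit (P - H)) :
    IsUnit (Matrix.fromBlocks (1 : Matrix (Fin N) (Fin N) ℂ) 1 H P) := by
  rw [Matrix.isUnit_iff_isUnit_det] at *
  rwa [Matrix.det_fromBlocks_one₁₁, Matrix.mul_one]

theorem bd_conj {N : ℕ} (a mm H P : Matrix (Fin N) (Fin N) ℂ) (h : IsUnit (P - H))
    (hH : H * H = a * H + mm) (hP : P * P = a * P + mm) :
    (Matrix.fromBlocks (1 : Matrix (Fin N) (Fin N) ℂ) 1 H P)⁻¹ * Matrix.fromBlocks 0 1 mm a * Matrix.fromBlocks 1 1 H P =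
      Matrix.fromBlocks H 0 0 P := by
  have hV := (Matrix.isUnit_iff_isUnit_det _).1 (bd_V_unit H P h)
  have e : Matrix.fromBlocks 0 1 mm a * Matrix.fromBlocks (1 : Matrix (Fin N) (Fin N) ℂ) 1 H P =
      Matrix.fromBlocks (1 : Matrix (Fin N) (Fin N) ℂ) 1 H P * Matrix.fromBlocks H 0 0 P := by
    simp [Matrix.fromBlocks_multiply, hH, hP, add_comm]
  rw [Matrix.mul_assoc, e, ← Matrix.mul_assoc, Matrix.nonsing_inv_mul _ hV, Matrix.one_mul]

section normed
attribute [local instance] Matrix.linftyOpNormedRing Matrix.linftyOpNormedAlgebra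

theorem bd_entry_le {N : ℕ} (S : Matrix (Fin N) (Fin N) ℂ) (i j : Fin N) : ‖S i j‖ ≤ ‖S‖ := by
  have h : ‖S i j‖₊ ≤ Finset.univ.sup fun i => ∑ j, ‖S i j‖₊ :=
    (Finset.single_le_sum (f := fun j => ‖S i j‖₊) (fun _ _ => zero_le) (Finset.mem_univ j)).trans
      (Finset.le_sup (f := fun i => ∑ j, ‖S i j‖₊) (Finset.mem_univ i))
  have h2 : ‖S‖ = _ := Matrix.linfty_opNorm_def S
  rw [h2]
  exact_mod_cast h

theorem bd_contDiffAt_of_entries {N : ℕ} {X : Type*} [NormedAddCommGroup X] [NormedSpace ℝ X]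
    (f : X → Matrix (Fin N) (Fin N) ℂ) (x : X)
    (h : ∀ i j, ContDiffAt ℝ ∞ (fun y => f y i j) x) : ContDiffAt ℝ ∞ f x := by
  have e : f = fun y => ∑ i, ∑ j,
      (LinearMap.toContinuousLinearMap (Matrix.singleLinearMap ℝ i j :
        ℂ →ₗ[ℝ] Matrix (Fin N) (Fin N) ℂ)) (f y i j) := by
    funext y
    conv_lhs => rw [Matrix.matrix_eq_sum_single (f y)]
    rfl
  rw [e]
  refine ContDiffAt.sum fun i _ => ContDiffAt.sum fun j _ => ?_
  exact (ContinuousLinearMap.contDiff _).contDiffAt.comp x (h i j)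

theorem bd_contDiffAt_entry {N : ℕ} {X : Type*} [NormedAddCommGroup X] [NormedSpace ℝ X]
    (f : X → Matrix (Fin N) (Fin N) ℂ) (x : X) (h : ContDiffAt ℝ ∞ f x) (i j : Fin N) :
    ContDiffAt ℝ ∞ (fun y => f y i j) x :=
  ((LinearMap.toContinuousLinearMap (Matrix.entryLinearMap ℝ ℂ i j :
    Matrix (Fin N) (Fin N) ℂ →ₗ[ℝ] ℂ)).contDiff.contDiffAt).comp x h

theorem bd_contDiffAt_cmap {M N m : ℕ} (𝒪 : Set (Fin M → ℝ)) (hO : IsOpen 𝒪)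
    (S : (Fin M → ℝ) → Matrix (Fin N) (Fin N) ℝ)
    (h : ∀ i k, ContDiffOn ℝ ∞ (fun p => S p i k) 𝒪) (x : (Fin M → ℝ) × Freq m)
    (hx : x.1 ∈ 𝒪) : ContDiffAt ℝ ∞ (fun y : (Fin M → ℝ) × Freq m => cmap (S y.1)) x := by
  refine bd_contDiffAt_of_entries _ _ fun i j => ?_
  have h1 := (h i j).contDiffAt (hO.mem_nhds hx)
  exact Complex.ofRealCLM.contDiff.contDiffAt.comp x (h1.comp x contDiffAt_fst)

theorem bd_contDiffAt_inv {N : ℕ} {X : Type*} [NormedAddCommGroup X] [NormedSpace ℝ X]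
    (f : X → Matrix (Fin N) (Fin N) ℂ) (x : X) (h : ContDiffAt ℝ ∞ f x) (hu : IsUnit (f x)) :
    ContDiffAt ℝ ∞ (fun y => (f y)⁻¹) x := by
  simp only [Matrix.nonsing_inv_eq_ringInverse]
  obtain ⟨u, hu⟩ := hu
  have := contDiffAt_ringInverse ℝ (n := ∞) u
  rw [hu] at this
  exact this.comp x h


theorem bd_coord {M m : ℕ} (x : (Fin M → ℝ) × Freq m) (j : Fin m) :
    ‖x.2.2.1 j‖ ≤ ‖x.2‖ :=
  (norm_le_pi_norm _ j).trans ((norm_fst_le x.2.2).trans (norm_snd_le x.2))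

theorem bd_main {M N m : ℕ} (𝒪 : Set (Fin M → ℝ)) (hO : IsOpen 𝒪)
    (A : Fin (m + 1) → (Fin M → ℝ) → Matrix (Fin N) (Fin N) ℝ)
    (B : Fin (m + 1) → Fin (m + 1) → (Fin M → ℝ) → Matrix (Fin N) (Fin N) ℝ)
    (h0 : HypH0 𝒪 A B) (h2 : HypH2 𝒪 A B) (h3 : HypH3 𝒪 A)
    (p₀ : Fin M → ℝ) (hp₀ : p₀ ∈ 𝒪) :
    ∃ Ω : Set ((Fin M → ℝ) × Freq m), IsOpen Ω ∧ (p₀, (0 : Freq m)) ∈ Ω ∧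
      (∀ x ∈ Ω, x.1 ∈ 𝒪) ∧
    ∃ c > (0 : ℝ),
    ∃ H P : (Fin M → ℝ) × Freq m → Matrix (Fin N) (Fin N) ℂ,
      (∀ i j, ContDiffOn ℝ ∞ (fun x => H x i j) Ω) ∧
      (∀ i j, ContDiffOn ℝ ∞ (fun x => P x i j) Ω) ∧
      (∀ x ∈ Ω, IsUnit (P x - H x)) ∧
      (∀ x ∈ Ω, H x * H x = calA (fun j => A j x.1) (fun j k => B j k x.1) x.2 * H x +
        calM (fun j => A j x.1) (fun j k => B j k x.1) x.2) ∧
      (∀ x ∈ Ω, P x * P x = calA (fun j => A j x.1) (fun j k => B j k x.1) x.2 * P x +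
        calM (fun j => A j x.1) (fun j k => B j k x.1) x.2) ∧
      (∀ p, (p, (0 : Freq m)) ∈ Ω → H (p, 0) = 0 ∧
        P (p, 0) = (cmap (B (Fin.last m) (Fin.last m) p))⁻¹ * cmap (A (Fin.last m) p)) ∧
      (∀ x ∈ Ω, ∀ μ ∈ spectrum ℂ (P x), c ≤ |μ.re|) ∧
      ∃ C : ℝ, ∀ x ∈ Ω, ∀ i j,
        ‖H x i j - hypBlockLin A x.1 x.2 i j‖ ≤ C * ‖x.2‖ ^ 2 := by
  obtain ⟨c₀, hc₀, hpar⟩ := bd_parab_last h2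
  have hBu : ∀ p ∈ 𝒪, IsUnit (cmap (B (Fin.last m) (Fin.last m) p)) := fun p hp =>
    bd_unit_limit c₀ hc₀ _ _ (hpar p hp)
  have hAu : ∀ p ∈ 𝒪, IsUnit (cmap (A (Fin.last m) p)) := by
    intro p hp
    rw [Matrix.isUnit_iff_isUnit_det, isUnit_iff_ne_zero]
    have e : (cmap (A (Fin.last m) p)).det = (((A (Fin.last m) p).det : ℝ) : ℂ) :=
      (RingHom.map_det Complex.ofRealHom (A (Fin.last m) p)).symm
    rw [e]
    exact_mod_cast h3 p hp
  have cA : ∀ x : (Fin M → ℝ) × Freq m, x.1 ∈ 𝒪 → ∀ j,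
      ContDiffAt ℝ ∞ (fun y : (Fin M → ℝ) × Freq m => cmap (A j y.1)) x :=
    fun x hx j => bd_contDiffAt_cmap 𝒪 hO (A j) (h0.1 j) x hx
  have cB : ∀ x : (Fin M → ℝ) × Freq m, x.1 ∈ 𝒪 → ∀ j k,
      ContDiffAt ℝ ∞ (fun y : (Fin M → ℝ) × Freq m => cmap (B j k y.1)) x :=
    fun x hx j k => bd_contDiffAt_cmap 𝒪 hO (B j k) (h0.2 j k) x hx
  have cBi : ∀ x : (Fin M → ℝ) × Freq m, x.1 ∈ 𝒪 →
      ContDiffAt ℝ ∞ (fun y : (Fin M → ℝ) × Freq m =>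
        (cmap (B (Fin.last m) (Fin.last m) y.1))⁻¹) x :=
    fun x hx => bd_contDiffAt_inv _ x (cB x hx _ _) (hBu _ hx)
  have cη : ∀ (x : (Fin M → ℝ) × Freq m) (j : Fin m),
      ContDiffAt ℝ ∞ (fun y : (Fin M → ℝ) × Freq m => (y.2.2.1 j : ℂ)) x := fun x j =>
    Complex.ofRealCLM.contDiff.contDiffAt.comp x (by fun_prop)
  have cηη : ∀ (x : (Fin M → ℝ) × Freq m) (j k : Fin m),
      ContDiffAt ℝ ∞ (fun y : (Fin M → ℝ) × Freq m => ((y.2.2.1 j * y.2.2.1 k : ℝ) : ℂ)) x :=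
    fun x j k => by
      simp only [Complex.ofReal_mul]
      exact (cη x j).mul (cη x k)
  have cτ : ∀ (x : (Fin M → ℝ) × Freq m),
      ContDiffAt ℝ ∞ (fun y : (Fin M → ℝ) × Freq m => (y.2.1 : ℂ)) x := fun x =>
    Complex.ofRealCLM.contDiff.contDiffAt.comp x (by fun_prop)
  have cγ : ∀ (x : (Fin M → ℝ) × Freq m),
      ContDiffAt ℝ ∞ (fun y : (Fin M → ℝ) × Freq m => (y.2.2.2 : ℂ)) x := fun x =>
    Complex.ofRealCLM.contDiff.contDiffAt.comp x (by fun_prop)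
  let Bi : (Fin M → ℝ) × Freq m → Matrix (Fin N) (Fin N) ℂ := fun x =>
    (cmap (B (Fin.last m) (Fin.last m) x.1))⁻¹
  let D : (Fin M → ℝ) × Freq m → Matrix (Fin N) (Fin N) ℂ := fun x =>
    ∑ j : Fin m, (Complex.I * (x.2.2.1 j : ℂ)) •
        (cmap (B j.castSucc (Fin.last m) x.1) + cmap (B (Fin.last m) j.castSucc x.1))
  let L : (Fin M → ℝ) × Freq m → Matrix (Fin N) (Fin N) ℂ := fun x =>
    (Complex.I * (x.2.1 : ℂ) + (x.2.2.2 : ℂ)) • (1 : Matrix (Fin N) (Fin N) ℂ) +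
      ∑ j : Fin m, (Complex.I * (x.2.2.1 j : ℂ)) • cmap (A j.castSucc x.1)
  let Q : (Fin M → ℝ) × Freq m → Matrix (Fin N) (Fin N) ℂ := fun x =>
    ∑ j : Fin m, ∑ k : Fin m, ((x.2.2.1 j * x.2.2.1 k : ℝ) : ℂ) •
      cmap (B j.castSucc k.castSucc x.1)
  let a : (Fin M → ℝ) × Freq m → Matrix (Fin N) (Fin N) ℂ := fun x =>
    calA (fun j => A j x.1) (fun j k => B j k x.1) x.2
  let mm : (Fin M → ℝ) × Freq m → Matrix (Fin N) (Fin N) ℂ := fun x =>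
    calM (fun j => A j x.1) (fun j k => B j k x.1) x.2
  let a0 : (Fin M → ℝ) × Freq m → Matrix (Fin N) (Fin N) ℂ := fun x =>
    Bi x * cmap (A (Fin.last m) x.1)
  have ea : ∀ x, a x = Bi x * (cmap (A (Fin.last m) x.1) - D x) := fun x => rfl
  have em : ∀ x, mm x = Bi x * (L x + Q x) := fun x => rfl
  have sD : ∀ x : (Fin M → ℝ) × Freq m, x.1 ∈ 𝒪 → ContDiffAt ℝ ∞ D x := fun x hx =>
    ContDiffAt.sum fun j _ => (contDiffAt_const.mul (cη x j)).smul ((cB x hx _ _).add (cB x hx _ _))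
  have sL : ∀ x : (Fin M → ℝ) × Freq m, x.1 ∈ 𝒪 → ContDiffAt ℝ ∞ L x := fun x hx =>
    (((contDiffAt_const.mul (cτ x)).add (cγ x)).smul contDiffAt_const).add
      (ContDiffAt.sum fun j _ => (contDiffAt_const.mul (cη x j)).smul (cA x hx _))
  have sQ : ∀ x : (Fin M → ℝ) × Freq m, x.1 ∈ 𝒪 → ContDiffAt ℝ ∞ Q x := fun x hx =>
    ContDiffAt.sum fun j _ => ContDiffAt.sum fun k _ => (cηη x j k).smul (cB x hx _ _)
  have sa : ∀ x : (Fin M → ℝ) × Freq m, x.1 ∈ 𝒪 → ContDiffAt ℝ ∞ a x := fun x hx =>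
    (cBi x hx).mul ((cA x hx _).sub (sD x hx))
  have sa0 : ∀ x : (Fin M → ℝ) × Freq m, x.1 ∈ 𝒪 → ContDiffAt ℝ ∞ a0 x := fun x hx =>
    (cBi x hx).mul (cA x hx _)
  have sm : ∀ x : (Fin M → ℝ) × Freq m, x.1 ∈ 𝒪 → ContDiffAt ℝ ∞ mm x := fun x hx =>
    (cBi x hx).mul ((sL x hx).add (sQ x hx))
  have D0 : ∀ p, D (p, 0) = 0 := fun p => by simp [D]
  have m0 : ∀ p, mm (p, 0) = 0 := fun p => by simp [em, L, Q]
  have aa0 : ∀ p, a (p, 0) = a0 (p, 0) := fun p => by simp [ea, D0, a0]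
  -- asymptotics
  let g : (Fin M → ℝ) × Freq m → ℝ := fun x => ‖x.2‖
  set x₀ : (Fin M → ℝ) × Freq m := (p₀, 0) with hx₀
  have hx₀O : x₀.1 ∈ 𝒪 := hp₀
  have one : ∀ {f : (Fin M → ℝ) × Freq m → Matrix (Fin N) (Fin N) ℂ}, ContDiffAt ℝ ∞ f x₀ →
      f =O[𝓝 x₀] (fun _ => (1 : ℝ)) := fun hf => hf.continuousAt.tendsto.isBigO_one ℝ
  have oη : ∀ j : Fin m, (fun x : (Fin M → ℝ) × Freq m => (Complex.I * (x.2.2.1 j : ℂ)))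
      =O[𝓝 x₀] g := fun j => Asymptotics.IsBigO.of_norm_le fun x => by
    simpa [g] using bd_coord x j
  have oηη : ∀ j k : Fin m, (fun x : (Fin M → ℝ) × Freq m =>
      ((x.2.2.1 j * x.2.2.1 k : ℝ) : ℂ)) =O[𝓝 x₀] (fun x => g x ^ 2) := fun j k =>
    Asymptotics.IsBigO.of_norm_le fun x => by
      rw [Complex.norm_real, norm_mul, sq]
      exact mul_le_mul (bd_coord x j) (bd_coord x k) (norm_nonneg _) (norm_nonneg _)
  have oτ : (fun x : (Fin M → ℝ) × Freq m => (Complex.I * (x.2.1 : ℂ)))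
      =O[𝓝 x₀] g := Asymptotics.IsBigO.of_norm_le fun x => by
    simpa [g] using norm_fst_le x.2
  have oγ : (fun x : (Fin M → ℝ) × Freq m => (x.2.2.2 : ℂ))
      =O[𝓝 x₀] g := Asymptotics.IsBigO.of_norm_le fun x => by
    simpa [g] using (norm_snd_le x.2.2).trans (norm_snd_le x.2)
  have smulO : ∀ {k : (Fin M → ℝ) × Freq m → ℂ} {f : (Fin M → ℝ) × Freq m →
      Matrix (Fin N) (Fin N) ℂ} {G : (Fin M → ℝ) × Freq m → ℝ}, k =O[𝓝 x₀] G →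
      f =O[𝓝 x₀] (fun _ => (1 : ℝ)) → (fun x => k x • f x) =O[𝓝 x₀] G := by
    intro k f G hk hf
    simpa using hk.smul hf
  have mulO : ∀ {k f : (Fin M → ℝ) × Freq m →
      Matrix (Fin N) (Fin N) ℂ} {G : (Fin M → ℝ) × Freq m → ℝ},
      k =O[𝓝 x₀] (fun _ => (1 : ℝ)) → f =O[𝓝 x₀] G → (fun x => k x * f x) =O[𝓝 x₀] G := by
    intro k f G hk hf
    simpa using hk.mul hf
  have oD : D =O[𝓝 x₀] g := Asymptotics.IsBigO.fun_sum fun j _ =>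
    smulO (oη j) (one ((cB x₀ hx₀O _ _).add (cB x₀ hx₀O _ _)))
  have oL : L =O[𝓝 x₀] g := (smulO (oτ.add oγ) (one contDiffAt_const)).add
    (Asymptotics.IsBigO.fun_sum fun j _ => smulO (oη j) (one (cA x₀ hx₀O _)))
  have oQ : Q =O[𝓝 x₀] (fun x => g x ^ 2) := Asymptotics.IsBigO.fun_sum fun j _ =>
    Asymptotics.IsBigO.fun_sum fun k _ => smulO (oηη j k) (one (cB x₀ hx₀O _ _))
  have og : (fun x => g x ^ 2) =O[𝓝 x₀] g := by
    have h1 : g =O[𝓝 x₀] (fun _ => (1 : ℝ)) := by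
      have : ContinuousAt g x₀ := by fun_prop
      exact this.tendsto.isBigO_one ℝ
    have h2 := (Asymptotics.isBigO_refl g (𝓝 x₀)).mul h1
    simpa [sq] using h2
  have om : mm =O[𝓝 x₀] g := mulO (one (cBi x₀ hx₀O)) (oL.add (oQ.trans og))
  have oa : (fun x => a x - a0 x) =O[𝓝 x₀] g := by
    have h1 : (fun x => -(Bi x * D x)) =O[𝓝 x₀] g := (mulO (one (cBi x₀ hx₀O)) oD).neg_left
    refine h1.congr_left fun x => ?_
    simp only [ea, a0]
    rw [mul_sub]
    abel
  have hBiu : ∀ p ∈ 𝒪, IsUnit (cmap (B (Fin.last m) (Fin.last m) p))⁻¹ := fun p hp =>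
    Matrix.isUnit_nonsing_inv_iff.2 (hBu p hp)
  have hau : IsUnit (a x₀) := by
    rw [hx₀, aa0]
    exact (hBiu _ hp₀).mul (hAu _ hp₀)
  obtain ⟨H, P, hs, hH, hP, hPu, hPH, haH, hPc, hP0, hO2⟩ := bd_abstract a a0 mm x₀
    (sa x₀ hx₀O).continuousAt (sm x₀ hx₀O).continuousAt (sa0 x₀ hx₀O).continuousAt
    (aa0 p₀).symm (m0 p₀) hau g om oa
  obtain ⟨c, hc, hspec⟩ := bd_spec P x₀ hPc (by
    rw [hP0, hx₀, aa0]
    exact bd_imag_axis c₀ hc₀ _ _ (hAu _ hp₀) (hBu _ hp₀) (hpar _ hp₀))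
  have hOev : ∀ᶠ x : (Fin M → ℝ) × Freq m in 𝓝 x₀, x.1 ∈ 𝒪 :=
    continuous_fst.continuousAt.tendsto.eventually (hO.mem_nhds hp₀)
  have hlin : (fun x => H x - hypBlockLin A x.1 x.2) =O[𝓝 x₀] (fun x => g x ^ 2) := by
    have h1 : (fun x : (Fin M → ℝ) × Freq m => (cmap (A (Fin.last m) x.1))⁻¹ * Q x)
        =O[𝓝 x₀] (fun x => g x ^ 2) :=
      mulO (one (bd_contDiffAt_inv _ x₀ (cA x₀ hx₀O _) (hAu _ hx₀O))) oQ
    refine (hO2.sub h1).congr' ?_ Filter.EventuallyEq.rfl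
    filter_upwards [hOev] with x hx
    have e1 : hypBlockLin A x.1 x.2 = -((cmap (A (Fin.last m) x.1))⁻¹ * L x) := rfl
    have e2 : Ring.inverse (a0 x) * mm x = (cmap (A (Fin.last m) x.1))⁻¹ * (L x + Q x) := by
      rw [← Matrix.nonsing_inv_eq_ringInverse]
      simp only [a0, em, Bi]
      rw [Matrix.mul_inv_rev, mul_assoc, ← mul_assoc ((cmap (B (Fin.last m) (Fin.last m) x.1))⁻¹)⁻¹,
        Matrix.nonsing_inv_mul _ ((Matrix.isUnit_iff_isUnit_det _).1 (hBiu _ hx)), one_mul]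
    rw [e1, e2, mul_add]
    abel
  obtain ⟨C, hC⟩ := hlin.bound
  have hall := (hs.and (hH.and (hP.and (hPu.and (hPH.and (haH.and (hspec.and (hOev.and hC))))))))
  obtain ⟨Ω, hΩ, hΩo, hΩx⟩ := eventually_nhds_iff.1 hall
  refine ⟨Ω, hΩo, hΩx, fun x hx => (hΩ x hx).2.2.2.2.2.2.2.1, c, hc, H, P, ?_, ?_,
    fun x hx => (hΩ x hx).2.2.2.2.1, fun x hx => (hΩ x hx).2.1, fun x hx => (hΩ x hx).2.2.1, ?_,
    fun x hx => (hΩ x hx).2.2.2.2.2.2.1, C, ?_⟩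
  · intro i j x hx
    have hxO := (hΩ x hx).2.2.2.2.2.2.2.1
    exact (bd_contDiffAt_entry _ _ ((hΩ x hx).1 (sa x hxO) (sm x hxO)).1 i j).contDiffWithinAt
  · intro i j x hx
    have hxO := (hΩ x hx).2.2.2.2.2.2.2.1
    exact (bd_contDiffAt_entry _ _ ((hΩ x hx).1 (sa x hxO) (sm x hxO)).2 i j).contDiffWithinAt
  · intro p hp
    obtain ⟨-, k1, k2, k3, -, k4, -⟩ := hΩ _ hp
    rw [m0, add_zero] at k1 k2
    constructor
    · have : (a (p, 0) - H (p, 0)) * H (p, 0) = 0 := by rw [sub_mul, k1, sub_self]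
      exact (k4.mul_right_eq_zero).1 this
    · have := k3.mul_right_cancel k2
      rw [this, aa0]
  · intro x hx i j
    have h1 := (hΩ x hx).2.2.2.2.2.2.2.2
    have h2 := bd_entry_le (H x - hypBlockLin A x.1 x.2) i j
    rw [Matrix.sub_apply] at h2
    refine h2.trans (h1.trans (le_of_eq ?_))
    simp [g]

end normed


/-- Smooth block diagonalization of `𝒢(p, ζ)` near `ζ = 0` into a small
"hyperbolic" block `H` and an "elliptic" block `P` whose eigenvalues stay away from the
imaginary axis. -/
theorem calG_block_diagonalization {M N m : ℕ} (𝒪 : Set (Fin M → ℝ)) (hO : IsOpen 𝒪)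
    (A : Fin (m + 1) → (Fin M → ℝ) → Matrix (Fin N) (Fin N) ℝ)
    (B : Fin (m + 1) → Fin (m + 1) → (Fin M → ℝ) → Matrix (Fin N) (Fin N) ℝ)
    (h0 : HypH0 𝒪 A B) (h1 : HypH1 𝒪 A) (h2 : HypH2 𝒪 A B) (h3 : HypH3 𝒪 A)
    (p₀ : Fin M → ℝ) (hp₀ : p₀ ∈ 𝒪) :
    ∃ Ω : Set ((Fin M → ℝ) × Freq m), IsOpen Ω ∧ (p₀, (0 : Freq m)) ∈ Ω ∧
      (∀ x ∈ Ω, x.1 ∈ 𝒪) ∧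
    ∃ c > (0 : ℝ),
    ∃ V : (Fin M → ℝ) × Freq m → Matrix (Fin N ⊕ Fin N) (Fin N ⊕ Fin N) ℂ,
    ∃ H P : (Fin M → ℝ) × Freq m → Matrix (Fin N) (Fin N) ℂ,
      (∀ i j, ContDiffOn ℝ ∞ (fun x => V x i j) Ω) ∧
      (∀ i j, ContDiffOn ℝ ∞ (fun x => H x i j) Ω) ∧
      (∀ i j, ContDiffOn ℝ ∞ (fun x => P x i j) Ω) ∧
      (∀ x ∈ Ω, IsUnit (V x)) ∧
      (∀ x ∈ Ω, (V x)⁻¹ * calG (fun j => A j x.1) (fun j k => B j k x.1) x.2 * V x =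
        Matrix.fromBlocks (H x) 0 0 (P x)) ∧
      (∀ p, (p, (0 : Freq m)) ∈ Ω → H (p, 0) = 0 ∧
        P (p, 0) = (cmap (B (Fin.last m) (Fin.last m) p))⁻¹ * cmap (A (Fin.last m) p)) ∧
      (∀ x ∈ Ω, ∀ μ ∈ spectrum ℂ (P x), c ≤ |μ.re|) ∧
      ∃ C : ℝ, ∀ x ∈ Ω, ∀ i j,
        ‖H x i j - hypBlockLin A x.1 x.2 i j‖ ≤ C * ‖x.2‖ ^ 2 := by
  obtain ⟨Ω, hΩo, hΩx, hΩO, c, hc, H, P, sH, sP, hu, eH, eP, hz, hspec, C, hC⟩ :=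
    bd_main 𝒪 hO A B h0 h2 h3 p₀ hp₀
  refine ⟨Ω, hΩo, hΩx, hΩO, c, hc, fun x => Matrix.fromBlocks 1 1 (H x) (P x), H, P, ?_, sH, sP,
    fun x hx => bd_V_unit _ _ (hu x hx),
    fun x hx => bd_conj _ _ _ _ (hu x hx) (eH x hx) (eP x hx), hz, hspec, C, hC⟩
  rintro (i | i) (j | j)
  · exact contDiffOn_const
  · exact contDiffOn_const
  · exact sH i j
  · exact sP i j

end
end
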